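/- Let n ≥ 4 and let V ∈ L^∞(ℝⁿ) be real-valued with |V(x)| ≤ C₀⟨x⟩^{-δ} for all x ∈ ℝⁿ, for some constants C₀ > 0 and δ > (n+2)/2. Let ψ ∈ C₀^∞((0,+∞)) be real-valued and set Ψ(t;h) = e^{itG} ψ(h²G) − e^{itG₀} ψ(h²G₀). Then there exists a constant C > 0, independent of t and h, such that for all t ∈ ℝ and all 0 < h ≤ 1, ‖Ψ(t;h)‖_{L²(ℝⁿ)→L²(ℝⁿ)} ≤ C h. -/

import Mathlib

/-!
The two functional calculi are compared through Stone's formula, using high-energy resolvent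
estimates with polynomial weights. Let `A = ⟨x⟩^{-3/2}` and `W = ⟨x⟩³ V`, which is bounded, so that
`V = A W A`.

*Limiting absorption.* The multiplier `Y = x/⟨x⟩ · ∇ + ½ div (x/⟨x⟩)` is skew-adjoint and has a
positive commutator with `-Δ`; positivity of the zeroth-order term is where `n ≥ 3` enters. Pairing
`(-Δ - z) u` with `Y u` and with `⟨x⟩⁻³ u` gives `‖A R₀(z) A‖ ≤ C (Re z)^{-1/2}` for `Re z ≥ 1`,
`0 < |Im z| ≤ 1`. At high energy `‖A R₀(z) A W‖ ≤ 1/2`, so that `‖A R(z) u‖ ≤ 2 ‖A R₀(z) u‖`.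

*Kato smoothing.* A `T T*` argument turns the resolvent bound into a bound for `Im z ‖A R₀(z)‖²`.
With `P = A R₀(l + iε) u` and `Q = A R₀(l - iε) u`, where `u` is localised in energy,
`‖P‖² + ‖Q‖² = ‖P - Q‖² + 2 Re ⟨Q, P⟩`. As `P - Q = 2iε A R₀(l + iε) R₀(l - iε) u`, the integral
over `l` of the first term is bounded by the total mass of the spectral measure; the mixed term is
the boundary value of a function holomorphic in the upper half plane, and its integral is handled
by moving the contour. The outcome is `∫_a^b ‖A R₀(l ± iε) u‖² dl ≤ C a^{-1/2} ‖u‖²`, uniformly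
in `ε`.

*Comparison.* By Stone's formula `f(G) - f(G₀)` is the strong limit of integrals of `f` against the
difference of the two Poisson kernels. The resolvent identity `R - R₀ = -R V R₀ = -(A R*)* W (A R₀)`
and Kato smoothing bound it by `C a^{-1/2} sup |f|` when `f` is supported in `(a, b]` with
`b ≤ κ a`. For `f(x) = e^{itx} ψ(h² x)` one has `a = α / h²`, which gives `O(h)` for small `h`.
-/

open MeasureTheory Filter Topology Real Set

noncomputable section

abbrev Euc (n : ℕ) := EuclideanSpace ℝ (Fin n)

abbrev L2 (n : ℕ) := Lp ℂ 2 (volume : Measure (Euc n))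

/-- Japanese bracket `⟨x⟩ = (1+|x|²)^{1/2}`. -/
def jb {n : ℕ} (x : Euc n) : ℝ := Real.sqrt (1 + ‖x‖ ^ 2)

/-- `⟨r⟩ = (1+r²)^{1/2}` for a real number `r`. -/
def jbR (r : ℝ) : ℝ := Real.sqrt (1 + r ^ 2)

/-- The Euclidean Laplacian of a function. -/
def lapl {n : ℕ} (f : Euc n → ℂ) (x : Euc n) : ℂ :=
  ∑ i : Fin n,
    iteratedFDeriv ℝ 2 f x ![EuclideanSpace.single i (1 : ℝ), EuclideanSpace.single i (1 : ℝ)]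

/-- `T` is the (unique) self-adjoint realization of the Schrödinger operator `-Δ + V`
on `L²(ℝⁿ)`: `T` is self-adjoint and acts as `-Δ + V` on Schwartz functions. -/
structure IsSchrodingerOp {n : ℕ} (V : Euc n → ℝ) (T : L2 n →ₗ.[ℂ] L2 n) : Prop where
  selfAdjoint : IsSelfAdjoint T
  eq_on_schwartz : ∀ f : SchwartzMap (Euc n) ℂ,
    ∃ u : T.domain, ((u : L2 n) : Euc n → ℂ) =ᵐ[volume] ⇑f ∧
      ((T u : L2 n) : Euc n → ℂ) =ᵐ[volume] fun x => -lapl (⇑f) x + (V x : ℂ) * f x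

/-- `fc` is the Borel functional calculus of the self-adjoint operator `T`:
a bounded-pointwise-continuous algebra homomorphism on bounded Borel functions
whose value on `(· - z)⁻¹` is the resolvent `(T - z)⁻¹`. -/
structure IsBorelFunctionalCalculus {n : ℕ} (T : L2 n →ₗ.[ℂ] L2 n)
    (fc : (ℝ → ℂ) → (L2 n →L[ℂ] L2 n)) : Prop where
  map_one : fc (fun _ => 1) = ContinuousLinearMap.id ℂ (L2 n)
  map_add : ∀ f g : ℝ → ℂ, Measurable f → Measurable g → (∃ M, ∀ x, ‖f x‖ ≤ M) →
    (∃ M, ∀ x, ‖g x‖ ≤ M) → fc (fun x => f x + g x) = fc f + fc g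
  map_mul : ∀ f g : ℝ → ℂ, Measurable f → Measurable g → (∃ M, ∀ x, ‖f x‖ ≤ M) →
    (∃ M, ∀ x, ‖g x‖ ≤ M) → fc (fun x => f x * g x) = (fc f).comp (fc g)
  norm_le : ∀ (f : ℝ → ℂ) (M : ℝ), Measurable f → (∀ x, ‖f x‖ ≤ M) → ‖fc f‖ ≤ M
  tendsto_of_ptwise : ∀ (F : ℕ → ℝ → ℂ) (f : ℝ → ℂ) (M : ℝ),
    (∀ k, Measurable (F k)) → Measurable f → (∀ k x, ‖F k x‖ ≤ M) →
    (∀ x, Tendsto (fun k => F k x) atTop (𝓝 (f x))) →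
    ∀ u : L2 n, Tendsto (fun k => fc (F k) u) atTop (𝓝 (fc f u))
  resolvent : ∀ z : ℂ, z.im ≠ 0 → ∀ u : L2 n,
    ∃ v : T.domain, (v : L2 n) = fc (fun x => ((x : ℂ) - z)⁻¹) u ∧
      T v = z • (v : L2 n) + u

/-- A real-valued function of class `C₀^∞((0,+∞))`. -/
def IsCutoff (ψ : ℝ → ℝ) : Prop :=
  ContDiff ℝ (⊤ : ℕ∞) ψ ∧ HasCompactSupport ψ ∧ tsupport ψ ⊆ Set.Ioi 0

/-- A real-valued `C^∞(ℝ)` function supported in `[a,+∞)` which equals `1` on `[2a,+∞)`. -/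
def IsChi (a : ℝ) (χ : ℝ → ℝ) : Prop :=
  ContDiff ℝ (⊤ : ℕ∞) χ ∧ Function.support χ ⊆ Set.Ici a ∧ ∀ x, 2 * a ≤ x → χ x = 1

open scoped SchwartzMap LineDeriv Laplacian ComplexConjugate InnerProductSpace

/-! ### Calculus on Schwartz functions -/

/-- The `L²` class of a Schwartz function. -/
def toL2 {n : ℕ} : 𝓢(Euc n, ℂ) →L[ℂ] L2 n := SchwartzMap.toLpCLM ℂ ℂ 2 volume

/-- The partial derivative `∂ⱼ` on Schwartz functions. -/
def pderiv {n : ℕ} (j : Fin n) : 𝓢(Euc n, ℂ) →L[ℂ] 𝓢(Euc n, ℂ) :=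
  LineDeriv.lineDerivOpCLM ℂ 𝓢(Euc n, ℂ) (EuclideanSpace.single j (1 : ℝ))

/-- Multiplication of Schwartz functions by a real function `g`. As for `SchwartzMap.smulLeftCLM`,
the value is junk unless `g` has temperate growth. -/
def mulFun {n : ℕ} (g : Euc n → ℝ) : 𝓢(Euc n, ℂ) →L[ℂ] 𝓢(Euc n, ℂ) :=
  SchwartzMap.smulLeftCLM ℂ (fun x => (g x : ℂ))

/-- The operator `-Δ - z` on Schwartz functions. -/
def freeOp {n : ℕ} (z : ℂ) (u : 𝓢(Euc n, ℂ)) : 𝓢(Euc n, ℂ) := -(Δ u) - z • u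

section SchwartzCalculus

variable {n : ℕ}

lemma coeFn_toL2 (u : 𝓢(Euc n, ℂ)) : (toL2 u : Euc n → ℂ) =ᵐ[volume] u :=
  SchwartzMap.coeFn_toLp u 2 volume

lemma denseRange_toL2 : DenseRange (toL2 (n := n)) :=
  SchwartzMap.denseRange_toLpCLM (F := ℂ) (E := Euc n) (p := 2) (μ := volume) (by norm_num)

lemma inner_toL2 (u v : 𝓢(Euc n, ℂ)) :
    inner ℂ (toL2 u) (toL2 v) = ∫ x, conj (u x) * v x := by
  refine (SchwartzMap.inner_toL2_toL2_eq u v (μ := volume)).trans (integral_congr_ae ?_)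
  exact Eventually.of_forall fun x => by simp [mul_comm]

lemma integrable_conj_mul (u v : 𝓢(Euc n, ℂ)) : Integrable (fun x => conj (u x) * v x) := by
  refine (L2.integrable_inner (𝕜 := ℂ) (toL2 u) (toL2 v)).congr ?_
  filter_upwards [coeFn_toL2 u, coeFn_toL2 v] with x hx hy
  rw [hx, hy]; simp [mul_comm]

lemma mulFun_apply {g : Euc n → ℝ} (hg : g.HasTemperateGrowth) (u : 𝓢(Euc n, ℂ)) (x : Euc n) :
    mulFun g u x = (g x : ℂ) * u x :=
  SchwartzMap.smulLeftCLM_apply_apply (Function.Complex.hasTemperateGrowth_ofReal.comp hg) u x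

lemma mulFun_mulFun {g k : Euc n → ℝ} (hg : g.HasTemperateGrowth) (hk : k.HasTemperateGrowth)
    (u : 𝓢(Euc n, ℂ)) : mulFun g (mulFun k u) = mulFun (fun x => g x * k x) u := by
  ext x
  have hgk : (fun x => g x * k x).HasTemperateGrowth := hg.mul hk
  rw [mulFun_apply hg, mulFun_apply hk, mulFun_apply hgk]
  push_cast; ring

lemma inner_mulFun {g : Euc n → ℝ} (hg : g.HasTemperateGrowth) (u v : 𝓢(Euc n, ℂ)) :
    inner ℂ (toL2 (mulFun g u)) (toL2 v) = ∫ x, (g x : ℂ) * (conj (u x) * v x) := by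
  rw [inner_toL2]
  congr 1; ext x
  rw [mulFun_apply hg, map_mul, Complex.conj_ofReal, mul_assoc]

lemma inner_mulFun_left {g : Euc n → ℝ} (hg : g.HasTemperateGrowth) (u v : 𝓢(Euc n, ℂ)) :
    inner ℂ (toL2 (mulFun g u)) (toL2 v) = inner ℂ (toL2 u) (toL2 (mulFun g v)) := by
  rw [inner_mulFun hg, inner_toL2]
  congr 1; ext x
  rw [mulFun_apply hg]; ring

lemma inner_pderiv_left (j : Fin n) (u v : 𝓢(Euc n, ℂ)) :
    inner ℂ (toL2 (pderiv j u)) (toL2 v) = -inner ℂ (toL2 u) (toL2 (pderiv j v)) := by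
  have h := SchwartzMap.integral_bilinear_lineDerivOp_right_eq_neg_left (μ := volume) u v
    ((ContinuousLinearMap.mul ℝ ℂ).comp (Complex.conjCLE : ℂ →L[ℝ] ℂ))
    (EuclideanSpace.single j (1 : ℝ) : Euc n)
  rw [inner_toL2, inner_toL2]
  exact (neg_eq_iff_eq_neg.mpr h).symm

lemma inner_pderiv_right (j : Fin n) (u v : 𝓢(Euc n, ℂ)) :
    inner ℂ (toL2 u) (toL2 (pderiv j v)) = -inner ℂ (toL2 (pderiv j u)) (toL2 v) := by
  rw [inner_pderiv_left, neg_neg]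

lemma pderiv_comm (j k : Fin n) (u : 𝓢(Euc n, ℂ)) :
    pderiv j (pderiv k u) = pderiv k (pderiv j u) := by
  ext x
  have hsymm : IsSymmSndFDerivAt ℝ (u : Euc n → ℂ) x :=
    (u.smooth 2).contDiffAt.isSymmSndFDerivAt (by simp)
  have hsnd (a b : Euc n) : (∂_{a} (∂_{b} u)) x = fderiv ℝ (fderiv ℝ u) x a b := by
    have hb : ((∂_{b} u : 𝓢(Euc n, ℂ)) : Euc n → ℂ) = fun y => fderiv ℝ u y b :=
      funext fun y => SchwartzMap.lineDerivOp_apply_eq_fderiv b u y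
    have hdiff : DifferentiableAt ℝ (fderiv ℝ u) x :=
      ((u.smooth 2).fderiv_right (m := 1) (by norm_num)).differentiable (by norm_num) x
    rw [SchwartzMap.lineDerivOp_apply_eq_fderiv, hb, fderiv_clm_apply hdiff (by fun_prop)]
    simp
  simpa only [pderiv, LineDeriv.lineDerivOpCLM_apply, hsnd] using hsymm _ _

lemma pderiv_mulFun {g g' : Euc n → ℝ} (hg : g.HasTemperateGrowth) (hg' : g'.HasTemperateGrowth)
    (j : Fin n) (hd : ∀ x, fderiv ℝ g x (EuclideanSpace.single j 1) = g' x) (u : 𝓢(Euc n, ℂ)) :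
    pderiv j (mulFun g u) = mulFun g (pderiv j u) + mulFun g' u := by
  ext x
  have hgx : HasFDerivAt (fun y => (g y : ℂ)) (Complex.ofRealCLM.comp (fderiv ℝ g x)) x :=
    Complex.ofRealCLM.hasFDerivAt.comp x (hg.1.differentiable (by simp) x).hasFDerivAt
  have hgu : (mulFun g u : Euc n → ℂ) = (fun y => (g y : ℂ)) * ⇑u :=
    funext (mulFun_apply hg u)
  rw [add_apply, mulFun_apply hg, mulFun_apply hg']
  simp only [pderiv, LineDeriv.lineDerivOpCLM_apply, SchwartzMap.lineDerivOp_apply_eq_fderiv]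
  rw [hgu, (hgx.mul (SchwartzMap.hasFDerivAt u x)).fderiv]
  simp [hd, mul_comm]

lemma two_mul_re_inner_mulFun_pderiv {g g' : Euc n → ℝ} (hg : g.HasTemperateGrowth)
    (hg' : g'.HasTemperateGrowth) (j : Fin n)
    (hd : ∀ x, fderiv ℝ g x (EuclideanSpace.single j 1) = g' x) (u : 𝓢(Euc n, ℂ)) :
    2 * (inner ℂ (toL2 (mulFun g u)) (toL2 (pderiv j u))).re =
      -(inner ℂ (toL2 (mulFun g' u)) (toL2 u)).re := by
  have hparts : inner ℂ (toL2 (mulFun g u)) (toL2 (pderiv j u)) =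
      -inner ℂ (toL2 (mulFun g (pderiv j u))) (toL2 u) - inner ℂ (toL2 (mulFun g' u)) (toL2 u) := by
    rw [inner_pderiv_right, pderiv_mulFun hg hg' j hd, map_add, inner_add_left]; ring
  have hsymm : (inner ℂ (toL2 (mulFun g (pderiv j u))) (toL2 u)).re =
      (inner ℂ (toL2 (mulFun g u)) (toL2 (pderiv j u))).re := by
    rw [inner_mulFun_left hg, ← inner_conj_symm, Complex.conj_re]
  have hre := congrArg Complex.re hparts
  simp only [Complex.sub_re, Complex.neg_re, hsymm] at hre
  linarith

lemma laplacian_eq_sum_pderiv (u : 𝓢(Euc n, ℂ)) : Δ u = ∑ k, pderiv k (pderiv k u) := by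
  have h := SchwartzMap.laplacian_eq_sum (EuclideanSpace.basisFun (Fin n) ℝ) u
  simp only [EuclideanSpace.basisFun_apply] at h
  exact h

lemma lapl_eq_laplacian (u : 𝓢(Euc n, ℂ)) (x : Euc n) : lapl u x = Δ u x := by
  have h := InnerProductSpace.laplacian_eq_iteratedFDeriv_orthonormalBasis (u : Euc n → ℂ)
    (EuclideanSpace.basisFun (Fin n) ℝ)
  simp only [EuclideanSpace.basisFun_apply] at h
  rw [SchwartzMap.laplacian_apply, h, lapl]

/-- The inverse is rationalised, so that only a power of `1 + y²` with
`y = (q - Re z) / Im z` real has to be inverted. -/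
lemma hasTemperateGrowth_inv_sub {E : Type*} [NormedAddCommGroup E] [NormedSpace ℝ E]
    {q : E → ℝ} (hq : q.HasTemperateGrowth) {z : ℂ} (hz : z.im ≠ 0) :
    (fun x => ((q x : ℂ) - z)⁻¹).HasTemperateGrowth := by
  set y : E → ℝ := fun x => (q x - z.re) * z.im⁻¹ with hy_def
  have hy : y.HasTemperateGrowth :=
    (hq.sub (Function.HasTemperateGrowth.const _)).mul (Function.HasTemperateGrowth.const _)
  have hinv : (fun x => (((1 + ‖y x‖ ^ 2) ^ (-1 : ℝ) : ℝ) : ℂ)).HasTemperateGrowth :=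
    Function.Complex.hasTemperateGrowth_ofReal.comp
      ((Function.hasTemperateGrowth_one_add_norm_sq_rpow ℝ (-1)).comp hy)
  have hrationalised : (fun x => ((q x : ℂ) - conj z) *
      (((z.im : ℂ) ^ 2)⁻¹ * (((1 + ‖y x‖ ^ 2) ^ (-1 : ℝ) : ℝ) : ℂ))).HasTemperateGrowth :=
    ((Function.Complex.hasTemperateGrowth_ofReal.comp hq).sub
      (Function.HasTemperateGrowth.const _)).mul ((Function.HasTemperateGrowth.const _).mul hinv)
  convert hrationalised using 2 with x
  have hnormSq : Complex.normSq ((q x : ℂ) - z) = z.im ^ 2 * (1 + ‖y x‖ ^ 2) := by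
    simp only [hy_def, Complex.normSq_apply, Complex.sub_re, Complex.ofReal_re, Complex.sub_im,
      Complex.ofReal_im, Real.norm_eq_abs, sq_abs]
    field_simp
    ring
  rw [Complex.inv_def, hnormSq, Real.rpow_neg_one, map_sub, Complex.conj_ofReal, mul_inv]
  push_cast
  ring

lemma freeOp_eq_fourierMultiplierCLM (z : ℂ) (u : 𝓢(Euc n, ℂ)) :
    freeOp z u = SchwartzMap.fourierMultiplierCLM ℂ
      (fun ξ : Euc n => ((((2 * π) ^ 2 * ‖ξ‖ ^ 2 : ℝ) : ℂ) - z)) u := by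
  have hN : (fun ξ : Euc n => ‖ξ‖ ^ 2).HasTemperateGrowth :=
    Function.hasTemperateGrowth_norm_sq _
  have hq : (fun ξ : Euc n => (2 * π) ^ 2 * ‖ξ‖ ^ 2).HasTemperateGrowth :=
    (Function.HasTemperateGrowth.const _).mul hN
  have hqC : (fun ξ : Euc n => (((2 * π) ^ 2 * ‖ξ‖ ^ 2 : ℝ) : ℂ)).HasTemperateGrowth :=
    Function.Complex.hasTemperateGrowth_ofReal.comp hq
  have hlaplacian : -(Δ u) = SchwartzMap.fourierMultiplierCLM ℂ
      (fun ξ : Euc n => (((2 * π) ^ 2 * ‖ξ‖ ^ 2 : ℝ) : ℂ)) u := by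
    rw [SchwartzMap.laplacian_eq_fourierMultiplierCLM u, neg_smul, neg_neg]
    exact ((SchwartzMap.fourierMultiplierCLM_ofReal (F := ℂ) ℂ hq u).trans
      (DFunLike.congr_fun (SchwartzMap.fourierMultiplierCLM_smul hN ((2 * π) ^ 2)) u)).symm
  have hconst : z • u = SchwartzMap.fourierMultiplierCLM ℂ (fun _ : Euc n => z) u := by
    rw [SchwartzMap.fourierMultiplierCLM_const]; simp
  rw [freeOp, hlaplacian, hconst]
  simp only [SchwartzMap.fourierMultiplierCLM_apply]
  rw [sub_eq_add_neg, ← FourierTransform.fourierInv_neg, ← FourierTransform.fourierInv_add,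
    ← sub_eq_add_neg, ← sub_apply,
    ← SchwartzMap.smulLeftCLM_sub hqC (Function.HasTemperateGrowth.const _)]
  rfl

lemma freeOp_surjective {z : ℂ} (hz : z.im ≠ 0) :
    Function.Surjective (freeOp (n := n) z) := by
  intro f
  have hq : (fun ξ : Euc n => (2 * π) ^ 2 * ‖ξ‖ ^ 2).HasTemperateGrowth :=
    (Function.HasTemperateGrowth.const _).mul (Function.hasTemperateGrowth_norm_sq _)
  have hsymbol : (fun ξ : Euc n => ((((2 * π) ^ 2 * ‖ξ‖ ^ 2 : ℝ) : ℂ) - z)).HasTemperateGrowth :=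
    (Function.Complex.hasTemperateGrowth_ofReal.comp hq).sub (Function.HasTemperateGrowth.const _)
  refine ⟨SchwartzMap.fourierMultiplierCLM ℂ
    (fun ξ : Euc n => ((((2 * π) ^ 2 * ‖ξ‖ ^ 2 : ℝ) : ℂ) - z)⁻¹) f, ?_⟩
  have hcancel : (fun ξ : Euc n => ((((2 * π) ^ 2 * ‖ξ‖ ^ 2 : ℝ) : ℂ) - z)) *
      (fun ξ : Euc n => ((((2 * π) ^ 2 * ‖ξ‖ ^ 2 : ℝ) : ℂ) - z)⁻¹) = fun _ => 1 := by
    ext ξ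
    refine mul_inv_cancel₀ fun h => hz ?_
    rw [← sub_eq_zero.mp h, Complex.ofReal_im]
  rw [freeOp_eq_fourierMultiplierCLM, SchwartzMap.fourierMultiplierCLM_fourierMultiplierCLM_apply
    hsymbol (hasTemperateGrowth_inv_sub hq hz), hcancel, SchwartzMap.fourierMultiplierCLM_const]
  simp

end SchwartzCalculus

/-! ### Powers of the Japanese bracket -/

/-- The weight `⟨x⟩ˢ`. -/
def jbPow {n : ℕ} (s : ℝ) (x : Euc n) : ℝ := jb x ^ s

section Weights

variable {n : ℕ}

lemma jb_sq (x : Euc n) : jb x ^ 2 = 1 + ‖x‖ ^ 2 := Real.sq_sqrt (by positivity)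

lemma one_le_jb (x : Euc n) : 1 ≤ jb x :=
  Real.one_le_sqrt.mpr (le_add_of_nonneg_right (sq_nonneg _))

lemma jb_pos (x : Euc n) : 0 < jb x := one_pos.trans_le (one_le_jb x)

lemma jbPow_pos (s : ℝ) (x : Euc n) : 0 < jbPow s x := Real.rpow_pos_of_pos (jb_pos x) s

lemma jbPow_zero (x : Euc n) : jbPow 0 x = 1 := Real.rpow_zero _

lemma jbPow_mul_jbPow (r s : ℝ) (x : Euc n) : jbPow r x * jbPow s x = jbPow (r + s) x :=
  (Real.rpow_add (jb_pos x) r s).symm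

lemma jbPow_add_two (s : ℝ) (x : Euc n) : jbPow (s + 2) x = (1 + ‖x‖ ^ 2) * jbPow s x := by
  rw [← jb_sq, ← Real.rpow_two, mul_comm]
  exact (jbPow_mul_jbPow s 2 x).symm

lemma jbPow_le_one {s : ℝ} (hs : s ≤ 0) (x : Euc n) : jbPow s x ≤ 1 :=
  Real.rpow_le_one_of_one_le_of_nonpos (one_le_jb x) hs

lemma abs_coord_mul_jbPow_le (j : Fin n) (s : ℝ) (x : Euc n) :
    |x j| * jbPow s x ≤ jbPow (s + 1) x := by
  have hcoord : |x j| ≤ jb x :=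
    (PiLp.norm_apply_le x j).trans (Real.le_sqrt_of_sq_le (le_add_of_nonneg_left zero_le_one))
  rw [add_comm, ← jbPow_mul_jbPow, show jbPow 1 x = jb x from Real.rpow_one _]
  exact mul_le_mul_of_nonneg_right hcoord (jbPow_pos s x).le

lemma jbPow_eq_rpow (s : ℝ) : (jbPow s : Euc n → ℝ) = fun x => (1 + ‖x‖ ^ 2) ^ (s / 2) := by
  ext x
  rw [jbPow, jb, Real.sqrt_eq_rpow, ← Real.rpow_mul (by positivity)]
  ring_nf

@[fun_prop]
lemma hasTemperateGrowth_jbPow (s : ℝ) : (jbPow s : Euc n → ℝ).HasTemperateGrowth := by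
  rw [jbPow_eq_rpow]
  exact Function.hasTemperateGrowth_one_add_norm_sq_rpow (Euc n) (s / 2)

@[fun_prop]
lemma hasTemperateGrowth_coord (j : Fin n) : (fun x : Euc n => x j).HasTemperateGrowth :=
  (EuclideanSpace.proj (𝕜 := ℝ) j : Euc n →L[ℝ] ℝ).hasTemperateGrowth

lemma hasFDerivAt_jbPow (s : ℝ) (x : Euc n) :
    HasFDerivAt (jbPow s) ((s * jbPow (s - 2) x) • innerSL ℝ x) x := by
  have hbase : HasFDerivAt (fun y : Euc n => 1 + ‖y‖ ^ 2) ((2 : ℝ) • innerSL ℝ x) x := by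
    have h := (hasStrictFDerivAt_norm_sq x).hasFDerivAt.const_add 1
    rwa [← Nat.cast_smul_eq_nsmul ℝ, Nat.cast_ofNat] at h
  rw [jbPow_eq_rpow, jbPow_eq_rpow]
  refine (hbase.rpow_const (p := s / 2) (Or.inl (by positivity))).congr_fderiv ?_
  ext y
  simp only [smul_apply, smul_eq_mul]
  ring_nf

lemma fderiv_jbPow (s : ℝ) (k : Fin n) (x : Euc n) :
    fderiv ℝ (jbPow s) x (EuclideanSpace.single k 1) = s * (x k * jbPow (s - 2) x) := by
  rw [(hasFDerivAt_jbPow s x).fderiv]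
  simp [EuclideanSpace.inner_single_right]
  ring

lemma fderiv_coord_mul_jbPow (s : ℝ) (j k : Fin n) (x : Euc n) :
    fderiv ℝ (fun x : Euc n => x j * jbPow s x) x (EuclideanSpace.single k 1) =
      (if j = k then 1 else 0) * jbPow s x + s * (x j * x k * jbPow (s - 2) x) := by
  have hcoord : HasFDerivAt (fun x : Euc n => x j) (EuclideanSpace.proj (𝕜 := ℝ) j) x :=
    (EuclideanSpace.proj (𝕜 := ℝ) j : Euc n →L[ℝ] ℝ).hasFDerivAt
  have hmul := (hcoord.mul (hasFDerivAt_jbPow s x)).fderiv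
  rw [show (fun x : Euc n => x j * jbPow s x) = (fun x : Euc n => x j) * jbPow s from rfl, hmul]
  simp [EuclideanSpace.inner_single_right]
  ring

end Weights

section Forms

variable {n : ℕ}

lemma re_conj_mul_self (c : ℂ) : (conj c * c).re = ‖c‖ ^ 2 := by
  rw [← Complex.normSq_eq_norm_sq, Complex.normSq_apply]; simp

lemma integrable_mul_re_conj_mul {g : Euc n → ℝ} (hg : g.HasTemperateGrowth)
    (u v : 𝓢(Euc n, ℂ)) : Integrable (fun x => g x * (conj (u x) * v x).re) := by
  refine (integrable_conj_mul (mulFun g u) v).re.congr (Eventually.of_forall fun x => ?_)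
  simp only [mulFun_apply hg, map_mul, Complex.conj_ofReal, mul_assoc, RCLike.re_to_complex,
    Complex.re_ofReal_mul]

lemma re_inner_mulFun {g : Euc n → ℝ} (hg : g.HasTemperateGrowth) (u v : 𝓢(Euc n, ℂ)) :
    (inner ℂ (toL2 (mulFun g u)) (toL2 v)).re = ∫ x, g x * (conj (u x) * v x).re := by
  rw [inner_toL2, ← RCLike.re_to_complex, ← integral_re (integrable_conj_mul (mulFun g u) v)]
  congr 1; ext x
  rw [RCLike.re_to_complex, mulFun_apply hg, (starRingEnd ℂ).map_mul, Complex.conj_ofReal,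
    mul_assoc, Complex.re_ofReal_mul]

lemma norm_mulFun_sq {g : Euc n → ℝ} (hg : g.HasTemperateGrowth) (u : 𝓢(Euc n, ℂ)) :
    ‖toL2 (mulFun g u)‖ ^ 2 = ∫ x, g x ^ 2 * (conj (u x) * u x).re := by
  rw [← inner_self_eq_norm_sq (𝕜 := ℂ), RCLike.re_to_complex, ← inner_mulFun_left hg,
    mulFun_mulFun hg hg, re_inner_mulFun (by fun_prop)]
  simp only [sq]

lemma norm_toL2_le_mul {u v : 𝓢(Euc n, ℂ)} {c : ℝ} (h : ∀ x, ‖u x‖ ≤ c * ‖v x‖) :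
    ‖toL2 u‖ ≤ c * ‖toL2 v‖ := by
  apply Lp.norm_le_mul_norm_of_ae_le_mul
  filter_upwards [coeFn_toL2 u, coeFn_toL2 v] with x hx hy
  rw [hx, hy]; exact h x

lemma mulFun_jbPow_jbPow (r s : ℝ) (u : 𝓢(Euc n, ℂ)) :
    mulFun (jbPow r) (mulFun (jbPow s) u) = mulFun (jbPow (r + s)) u := by
  rw [mulFun_mulFun (by fun_prop) (by fun_prop)]
  simp only [jbPow_mul_jbPow]

lemma mulFun_jbPow_zero (u : 𝓢(Euc n, ℂ)) : mulFun (jbPow 0) u = u := by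
  ext x; rw [mulFun_apply (by fun_prop), jbPow_zero, Complex.ofReal_one, one_mul]

lemma norm_inner_le_jbPow (s : ℝ) (u f : 𝓢(Euc n, ℂ)) :
    ‖inner ℂ (toL2 u) (toL2 f)‖ ≤
      ‖toL2 (mulFun (jbPow (-s)) u)‖ * ‖toL2 (mulFun (jbPow s) f)‖ := by
  have hsplit : inner ℂ (toL2 u) (toL2 f) =
      inner ℂ (toL2 (mulFun (jbPow (-s)) u)) (toL2 (mulFun (jbPow s) f)) := by
    rw [inner_mulFun_left (by fun_prop), mulFun_jbPow_jbPow, neg_add_cancel, mulFun_jbPow_zero]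
  rw [hsplit]
  exact norm_inner_le_norm _ _

end Forms

/-! ### The Morawetz multiplier -/

/-- Half the divergence of the vector field `x / ⟨x⟩`. -/
def halfDiv {n : ℕ} (x : Euc n) : ℝ := 1 / 2 * (((n : ℝ) - 1) * jbPow (-1) x + jbPow (-3) x)

/-- The second derivative `∂ₖ∂ⱼ⟨x⟩ = ∂ₖ(xⱼ/⟨x⟩)`. -/
def hessJb {n : ℕ} (k j : Fin n) (x : Euc n) : ℝ :=
  (if j = k then 1 else 0) * jbPow (-1) x - x j * x k * jbPow (-3) x

/-- The partial derivative `∂ₖ halfDiv`. -/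
def halfDivDeriv {n : ℕ} (k : Fin n) (x : Euc n) : ℝ :=
  -(1 / 2) * (((n : ℝ) - 1) * (x k * jbPow (-3) x) + 3 * (x k * jbPow (-5) x))

/-- The pure second partial derivative `∂ₖ² halfDiv`. -/
def halfDivDeriv₂ {n : ℕ} (k : Fin n) (x : Euc n) : ℝ :=
  -(1 / 2) * (((n : ℝ) - 1) * (jbPow (-3) x - 3 * (x k * x k * jbPow (-5) x)) +
    3 * (jbPow (-5) x - 5 * (x k * x k * jbPow (-7) x)))

/-- The skew-adjoint Morawetz multiplier `x/⟨x⟩ · ∇ + ½ div (x/⟨x⟩)`. -/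
def morawetz {n : ℕ} (u : 𝓢(Euc n, ℂ)) : 𝓢(Euc n, ℂ) :=
  ∑ j, mulFun (fun x => x j * jbPow (-1) x) (pderiv j u) + mulFun halfDiv u

section Morawetz

variable {n : ℕ}

@[fun_prop]
lemma hasTemperateGrowth_halfDiv : (halfDiv (n := n)).HasTemperateGrowth := by
  unfold halfDiv; fun_prop

@[fun_prop]
lemma hasTemperateGrowth_hessJb (k j : Fin n) : (hessJb k j).HasTemperateGrowth := by
  unfold hessJb; fun_prop

@[fun_prop]
lemma hasTemperateGrowth_halfDivDeriv (k : Fin n) : (halfDivDeriv k).HasTemperateGrowth := by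
  unfold halfDivDeriv; fun_prop

@[fun_prop]
lemma hasTemperateGrowth_halfDivDeriv₂ (k : Fin n) : (halfDivDeriv₂ k).HasTemperateGrowth := by
  unfold halfDivDeriv₂; fun_prop

lemma differentiable_of_hasTemperateGrowth {E F : Type*} [NormedAddCommGroup E] [NormedSpace ℝ E]
    [NormedAddCommGroup F] [NormedSpace ℝ F] {g : E → F} (hg : g.HasTemperateGrowth) :
    Differentiable ℝ g :=
  hg.1.differentiable (by simp)

lemma fderiv_coord_mul_jbPow_neg_one (k j : Fin n) (x : Euc n) :
    fderiv ℝ (fun x : Euc n => x j * jbPow (-1) x) x (EuclideanSpace.single k 1) =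
      hessJb k j x := by
  rw [fderiv_coord_mul_jbPow, hessJb]; norm_num [sub_eq_add_neg]

lemma fderiv_halfDiv (k : Fin n) (x : Euc n) :
    fderiv ℝ (halfDiv (n := n)) x (EuclideanSpace.single k 1) = halfDivDeriv k x := by
  have hterm (s : ℝ) : HasFDerivAt (jbPow s) (fderiv ℝ (jbPow s) x) x :=
    (differentiable_of_hasTemperateGrowth (by fun_prop) x).hasFDerivAt
  have hsum := (((hterm (-1)).const_mul ((n : ℝ) - 1)).add (hterm (-3))).const_mul (1 / 2)
  refine (congrArg (fun L : Euc n →L[ℝ] ℝ => L (EuclideanSpace.single k 1)) hsum.fderiv).trans ?_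
  simp only [smul_apply, add_apply, fderiv_jbPow, smul_eq_mul, halfDivDeriv]
  norm_num
  ring

lemma fderiv_halfDivDeriv (k : Fin n) (x : Euc n) :
    fderiv ℝ (halfDivDeriv k) x (EuclideanSpace.single k 1) = halfDivDeriv₂ k x := by
  have hterm (s : ℝ) : HasFDerivAt (fun y : Euc n => y k * jbPow s y)
      (fderiv ℝ (fun y : Euc n => y k * jbPow s y) x) x :=
    (differentiable_of_hasTemperateGrowth (by fun_prop) x).hasFDerivAt
  have hsum := (((hterm (-3)).const_mul ((n : ℝ) - 1)).add
    ((hterm (-5)).const_mul 3)).const_mul (-(1 / 2))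
  refine (congrArg (fun L : Euc n →L[ℝ] ℝ => L (EuclideanSpace.single k 1)) hsum.fderiv).trans ?_
  simp only [smul_apply, add_apply, fderiv_coord_mul_jbPow, smul_eq_mul, halfDivDeriv₂]
  norm_num
  ring

lemma norm_sq_eq_sum_mul_self (x : Euc n) : ‖x‖ ^ 2 = ∑ j, x j * x j := by
  simp only [EuclideanSpace.norm_sq_eq, Real.norm_eq_abs, sq_abs, ← sq]

lemma sum_hessJb_self (x : Euc n) : ∑ j, hessJb j j x = 2 * halfDiv x := by
  have hpow : jbPow (-1) x = (1 + ‖x‖ ^ 2) * jbPow (-3) x := by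
    rw [← jbPow_add_two]; norm_num
  have hsum : ∑ j, hessJb j j x = n * jbPow (-1) x - ‖x‖ ^ 2 * jbPow (-3) x := by
    simp [hessJb, Finset.sum_sub_distrib, ← Finset.sum_mul, norm_sq_eq_sum_mul_self]
  rw [hsum, halfDiv]
  linear_combination hpow

lemma laplacian_halfDiv (x : Euc n) : ∑ k, halfDivDeriv₂ k x = -(jbPow (-7) x / 2) *
    ((n - 1) * (1 + ‖x‖ ^ 2) * (n + (n - 3) * ‖x‖ ^ 2) + 3 * (n + (n - 5) * ‖x‖ ^ 2)) := by
  have hpow₅ : jbPow (-5) x = (1 + ‖x‖ ^ 2) * jbPow (-7) x := by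
    rw [← jbPow_add_two]; norm_num
  have hpow₃ : jbPow (-3) x = (1 + ‖x‖ ^ 2) * jbPow (-5) x := by
    rw [← jbPow_add_two]; norm_num
  have hsum : ∑ k, halfDivDeriv₂ k x =
      -(1 / 2) * (((n : ℝ) - 1) * (n * jbPow (-3) x - 3 * (‖x‖ ^ 2 * jbPow (-5) x)) +
        3 * (n * jbPow (-5) x - 5 * (‖x‖ ^ 2 * jbPow (-7) x))) := by
    simp [halfDivDeriv₂, Finset.sum_add_distrib, ← Finset.mul_sum, ← Finset.sum_mul,
      norm_sq_eq_sum_mul_self]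
  rw [hsum, hpow₃, hpow₅]
  ring

/-- Superharmonicity of `halfDiv` is what forces `n ≥ 3`: it gives the zeroth-order term of the
Morawetz commutator the good sign. -/
lemma laplacian_halfDiv_nonpos (hn : 3 ≤ n) (x : Euc n) : ∑ k, halfDivDeriv₂ k x ≤ 0 := by
  obtain ⟨k, rfl⟩ := Nat.exists_eq_add_of_le hn
  have hpoly : 0 ≤ ((3 + k : ℕ) - 1 : ℝ) * (1 + ‖x‖ ^ 2) *
      ((3 + k : ℕ) + ((3 + k : ℕ) - 3) * ‖x‖ ^ 2) +
        3 * ((3 + k : ℕ) + ((3 + k : ℕ) - 5) * ‖x‖ ^ 2) := by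
    have hexpand : 0 ≤ (2 + k : ℝ) * (k + k * ‖x‖ ^ 2 * (2 + ‖x‖ ^ 2)) +
        6 * k * ‖x‖ ^ 2 + 6 * k + 15 := by positivity
    push_cast
    linarith
  rw [laplacian_halfDiv, neg_mul]
  exact neg_nonpos.mpr (mul_nonneg (half_pos (jbPow_pos _ x)).le hpoly)

lemma sum_hessJb_mul (x : Euc n) (c : Fin n → ℂ) :
    ∑ k, ∑ j, hessJb k j x * (conj (c j) * c k).re =
      jbPow (-1) x * ∑ j, ‖c j‖ ^ 2 - jbPow (-3) x * ‖∑ j, (x j : ℂ) * c j‖ ^ 2 := by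
  have hdot : ‖∑ j, (x j : ℂ) * c j‖ ^ 2 = ∑ k, ∑ j, x j * x k * (conj (c j) * c k).re := by
    rw [← re_conj_mul_self, map_sum, Finset.sum_mul_sum, Complex.re_sum, Finset.sum_comm]
    simp only [Complex.re_sum]
    refine Finset.sum_congr rfl fun k _ => Finset.sum_congr rfl fun j _ => ?_
    simp only [map_mul, Complex.conj_ofReal, ← Complex.re_ofReal_mul]
    push_cast
    ring_nf
  rw [hdot, Finset.mul_sum, Finset.mul_sum, ← Finset.sum_sub_distrib]
  refine Finset.sum_congr rfl fun k _ => ?_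
  simp only [hessJb, sub_mul, ite_mul, one_mul, zero_mul, Finset.sum_sub_distrib,
    Finset.sum_ite_eq', Finset.mem_univ, if_true, re_conj_mul_self, Finset.mul_sum]
  congr 1
  exact Finset.sum_congr rfl fun j _ => by ring

lemma norm_sum_coord_mul_sq_le (x : Euc n) (c : Fin n → ℂ) :
    ‖∑ j, (x j : ℂ) * c j‖ ^ 2 ≤ ‖x‖ ^ 2 * ∑ j, ‖c j‖ ^ 2 := by
  have htriangle : ‖∑ j, (x j : ℂ) * c j‖ ≤ ∑ j, |x j| * ‖c j‖ :=
    (norm_sum_le _ _).trans_eq (by simp)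
  calc ‖∑ j, (x j : ℂ) * c j‖ ^ 2 ≤ (∑ j, |x j| * ‖c j‖) ^ 2 := by gcongr
    _ ≤ (∑ j, |x j| ^ 2) * ∑ j, ‖c j‖ ^ 2 := Finset.sum_mul_sq_le_sq_mul_sq _ _ _
    _ = ‖x‖ ^ 2 * ∑ j, ‖c j‖ ^ 2 := by simp only [EuclideanSpace.norm_sq_eq, Real.norm_eq_abs]

lemma jbPow_neg_three_mul_le_sum_hessJb (x : Euc n) (c : Fin n → ℂ) :
    jbPow (-3) x * ∑ j, ‖c j‖ ^ 2 ≤ ∑ k, ∑ j, hessJb k j x * (conj (c j) * c k).re := by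
  have hpow : jbPow (-1) x = (1 + ‖x‖ ^ 2) * jbPow (-3) x := by
    rw [← jbPow_add_two]; norm_num
  have hdot := mul_le_mul_of_nonneg_left (norm_sum_coord_mul_sq_le x c) (jbPow_pos (-3) x).le
  rw [sum_hessJb_mul, hpow]
  linarith

/-- The term `½ div` compensates the divergence produced by integrating `x/⟨x⟩ · ∇` by parts. -/
lemma inner_morawetz_left (u v : 𝓢(Euc n, ℂ)) :
    inner ℂ (toL2 (morawetz u)) (toL2 v) = -inner ℂ (toL2 u) (toL2 (morawetz v)) := by
  have hdiv : ∑ j, mulFun (hessJb j j) v = (2 : ℂ) • mulFun halfDiv v := by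
    ext x
    rw [sum_apply, smul_apply, mulFun_apply (by fun_prop), smul_eq_mul, ← mul_assoc]
    simp only [mulFun_apply (hasTemperateGrowth_hessJb _ _)]
    rw [← Finset.sum_mul, ← Complex.ofReal_sum, sum_hessJb_self]
    push_cast; ring
  have hinner : ∑ j, inner ℂ (toL2 u) (toL2 (mulFun (hessJb j j) v)) =
      2 * inner ℂ (toL2 u) (toL2 (mulFun halfDiv v)) := by
    rw [← inner_sum, ← map_sum, hdiv, map_smul, inner_smul_right]
  have hparts (j : Fin n) :
      inner ℂ (toL2 (mulFun (fun x => x j * jbPow (-1) x) (pderiv j u))) (toL2 v) =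
      -inner ℂ (toL2 u) (toL2 (mulFun (fun x => x j * jbPow (-1) x) (pderiv j v))) -
        inner ℂ (toL2 u) (toL2 (mulFun (hessJb j j) v)) := by
    rw [inner_mulFun_left (by fun_prop), inner_pderiv_left, pderiv_mulFun (by fun_prop)
      (by fun_prop) j (fderiv_coord_mul_jbPow_neg_one j j), map_add, inner_add_right]
    ring
  simp only [morawetz, map_add, map_sum, inner_add_left, inner_add_right, sum_inner, inner_sum,
    hparts, Finset.sum_sub_distrib, Finset.sum_neg_distrib, inner_mulFun_left
    hasTemperateGrowth_halfDiv, hinner]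
  ring

lemma re_inner_morawetz_self (u : 𝓢(Euc n, ℂ)) :
    (inner ℂ (toL2 (morawetz u)) (toL2 u)).re = 0 := by
  have hskew := congrArg Complex.re (inner_morawetz_left u u)
  rw [← inner_conj_symm (toL2 u), Complex.neg_re, Complex.conj_re] at hskew
  linarith

lemma pderiv_morawetz (k : Fin n) (u : 𝓢(Euc n, ℂ)) :
    pderiv k (morawetz u) = morawetz (pderiv k u) +
      (∑ j, mulFun (hessJb k j) (pderiv j u) + mulFun (halfDivDeriv k) u) := by
  simp only [morawetz, map_add, map_sum, pderiv_mulFun (hasTemperateGrowth_halfDiv)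
    (hasTemperateGrowth_halfDivDeriv k) k (fderiv_halfDiv k)]
  have hterm (j : Fin n) : pderiv k (mulFun (fun x => x j * jbPow (-1) x) (pderiv j u)) =
      mulFun (fun x => x j * jbPow (-1) x) (pderiv j (pderiv k u)) +
        mulFun (hessJb k j) (pderiv j u) := by
    rw [pderiv_mulFun (by fun_prop) (by fun_prop) k (fderiv_coord_mul_jbPow_neg_one k j),
      pderiv_comm]
  simp only [hterm, Finset.sum_add_distrib]
  abel

lemma sum_re_inner_halfDivDeriv_nonneg (hn : 3 ≤ n) (u : 𝓢(Euc n, ℂ)) :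
    0 ≤ ∑ k, (inner ℂ (toL2 (mulFun (halfDivDeriv k) u)) (toL2 (pderiv k u))).re := by
  have hparts (k : Fin n) :
      (inner ℂ (toL2 (mulFun (halfDivDeriv k) u)) (toL2 (pderiv k u))).re =
        ∫ x, -(1 / 2) * (halfDivDeriv₂ k x * (conj (u x) * u x).re) := by
    have h := two_mul_re_inner_mulFun_pderiv (hasTemperateGrowth_halfDivDeriv k)
      (hasTemperateGrowth_halfDivDeriv₂ k) k (fderiv_halfDivDeriv k) u
    rw [re_inner_mulFun (hasTemperateGrowth_halfDivDeriv₂ k)] at h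
    rw [integral_const_mul]
    linarith
  simp only [hparts]
  rw [← integral_finsetSum _ fun k _ => (integrable_mul_re_conj_mul (by fun_prop) u u).const_mul _]
  refine integral_nonneg fun x => ?_
  simp only [Pi.zero_apply]
  rw [← Finset.mul_sum, ← Finset.sum_mul, re_conj_mul_self]
  nlinarith [mul_nonpos_of_nonpos_of_nonneg (laplacian_halfDiv_nonpos hn x) (sq_nonneg ‖u x‖)]

lemma sum_norm_sq_le_sum_re_inner_hessJb (c : Fin n → 𝓢(Euc n, ℂ)) :
    ∑ j, ‖toL2 (mulFun (jbPow (-3 / 2)) (c j))‖ ^ 2 ≤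
      ∑ k, ∑ j, (inner ℂ (toL2 (mulFun (hessJb k j) (c j))) (toL2 (c k))).re := by
  have hint (k j : Fin n) : Integrable fun x => hessJb k j x * (conj (c j x) * c k x).re :=
    integrable_mul_re_conj_mul (by fun_prop) _ _
  have hintsq (j : Fin n) :
      Integrable fun x => jbPow (-3 / 2) x ^ 2 * (conj (c j x) * c j x).re := by
    simpa only [Pi.pow_apply] using integrable_mul_re_conj_mul
      ((hasTemperateGrowth_jbPow (-3 / 2)).pow 2) (c j) (c j)
  simp only [norm_mulFun_sq (hasTemperateGrowth_jbPow _),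
    re_inner_mulFun (hasTemperateGrowth_hessJb _ _)]
  simp only [← integral_finsetSum _ fun j _ => hintsq j,
    ← integral_finsetSum _ fun j _ => hint _ j]
  rw [← integral_finsetSum _ fun k _ => integrable_finsetSum _ fun j _ => hint k j]
  refine integral_mono (integrable_finsetSum _ fun j _ => hintsq j)
    (integrable_finsetSum _ fun k _ => integrable_finsetSum _ fun j _ => hint k j) fun x => ?_
  refine le_of_eq_of_le ?_ (jbPow_neg_three_mul_le_sum_hessJb x fun j => c j x)
  simp only [← Finset.mul_sum, sq (jbPow _ x), jbPow_mul_jbPow, re_conj_mul_self]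
  norm_num

lemma sum_norm_sq_le_re_inner_morawetz (hn : 3 ≤ n) (u : 𝓢(Euc n, ℂ)) :
    ∑ j, ‖toL2 (mulFun (jbPow (-3 / 2)) (pderiv j u))‖ ^ 2 ≤
      (inner ℂ (toL2 (morawetz u)) (toL2 (-(Δ u)))).re := by
  have hparts : (inner ℂ (toL2 (morawetz u)) (toL2 (-(Δ u)))).re =
      ∑ k, (inner ℂ (toL2 (pderiv k (morawetz u))) (toL2 (pderiv k u))).re := by
    rw [laplacian_eq_sum_pderiv, map_neg, inner_neg_right, map_sum, inner_sum,
      ← Finset.sum_neg_distrib, Complex.re_sum]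
    exact Finset.sum_congr rfl fun k _ => by rw [inner_pderiv_right, neg_neg]
  simp only [hparts, pderiv_morawetz, map_add, map_sum, inner_add_left, sum_inner, Complex.add_re,
    Complex.re_sum, re_inner_morawetz_self, zero_add, Finset.sum_add_distrib]
  exact le_add_of_le_of_nonneg (sum_norm_sq_le_sum_re_inner_hessJb fun j => pderiv j u)
    (sum_re_inner_halfDivDeriv_nonneg hn u)

end Morawetz

/-! ### The weighted resolvent estimate for the Laplacian -/

/-- The weighted norm `‖⟨x⟩ˢ u‖` in `L²`. -/
def weightedNorm {n : ℕ} (s : ℝ) (u : 𝓢(Euc n, ℂ)) : ℝ := ‖toL2 (mulFun (jbPow s) u)‖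

/-- The weighted Dirichlet norm `‖⟨x⟩ˢ ∇u‖` in `L²`. -/
def gradNorm {n : ℕ} (s : ℝ) (u : 𝓢(Euc n, ℂ)) : ℝ :=
  √(∑ j, weightedNorm s (pderiv j u) ^ 2)

/-- The constant of the weighted resolvent estimate for `-Δ` on `ℝⁿ`. -/
def lapConst (n : ℕ) : ℝ := 2 * (1 + 9 * (n : ℝ) ^ 2) * n ^ 2 + 2 + 16 * n * (1 + 9 * (n : ℝ) ^ 2)

section WeightedResolventEstimate

variable {n : ℕ}

lemma weightedNorm_nonneg (s : ℝ) (u : 𝓢(Euc n, ℂ)) : 0 ≤ weightedNorm s u := norm_nonneg _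

lemma weightedNorm_zero (u : 𝓢(Euc n, ℂ)) : weightedNorm 0 u = ‖toL2 u‖ := by
  rw [weightedNorm, mulFun_jbPow_zero]

lemma gradNorm_sq (s : ℝ) (u : 𝓢(Euc n, ℂ)) :
    gradNorm s u ^ 2 = ∑ j, weightedNorm s (pderiv j u) ^ 2 :=
  Real.sq_sqrt (Finset.sum_nonneg fun _ _ => sq_nonneg _)

lemma sum_weightedNorm_pderiv_le (s : ℝ) (u : 𝓢(Euc n, ℂ)) :
    ∑ j, weightedNorm s (pderiv j u) ≤ n * gradNorm s u := by
  have hle : ∀ j ∈ Finset.univ, weightedNorm s (pderiv j u) ≤ gradNorm s u := fun j hj =>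
    Real.le_sqrt_of_sq_le (Finset.single_le_sum
      (f := fun j => weightedNorm s (pderiv j u) ^ 2) (fun _ _ => sq_nonneg _) hj)
  simpa using Finset.sum_le_card_nsmul _ _ _ hle

lemma weightedNorm_mulFun_le {g : Euc n → ℝ} (hg : g.HasTemperateGrowth) {r s c : ℝ}
    (hle : ∀ x, jbPow s x * |g x| ≤ c * jbPow r x) (u : 𝓢(Euc n, ℂ)) :
    weightedNorm s (mulFun g u) ≤ c * weightedNorm r u := by
  refine norm_toL2_le_mul fun x => ?_
  rw [mulFun_apply (by fun_prop), mulFun_apply hg, mulFun_apply (by fun_prop)]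
  simp only [norm_mul, Complex.norm_real, Real.norm_eq_abs, abs_of_pos (jbPow_pos _ x),
    ← mul_assoc]
  exact mul_le_mul_of_nonneg_right (hle x) (norm_nonneg _)

lemma abs_halfDiv_le (hn : 1 ≤ n) (x : Euc n) : |halfDiv x| ≤ n := by
  have hn' : (1 : ℝ) ≤ n := by exact_mod_cast hn
  have hpos₁ := jbPow_pos (-1) x
  have hpos₃ := jbPow_pos (-3) x
  have hle₁ := jbPow_le_one (s := -1) (by norm_num) x
  have hle₃ := jbPow_le_one (s := -3) (by norm_num) x
  rw [halfDiv, abs_of_nonneg (by nlinarith)]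
  nlinarith

lemma weightedNorm_morawetz_le (hn : 1 ≤ n) (s : ℝ) (u : 𝓢(Euc n, ℂ)) :
    weightedNorm s (morawetz u) ≤ n * (gradNorm s u + weightedNorm s u) := by
  have hfield (j : Fin n) : weightedNorm s (mulFun (fun x => x j * jbPow (-1) x) (pderiv j u)) ≤
      1 * weightedNorm s (pderiv j u) := by
    refine weightedNorm_mulFun_le (by fun_prop) (fun x => ?_) _
    have hunit := abs_coord_mul_jbPow_le j (-1) x
    rw [neg_add_cancel, jbPow_zero] at hunit
    rw [abs_mul, abs_of_pos (jbPow_pos _ x), one_mul]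
    exact mul_le_of_le_one_right (jbPow_pos s x).le hunit
  have hdiv : weightedNorm s (mulFun halfDiv u) ≤ n * weightedNorm s u :=
    weightedNorm_mulFun_le (by fun_prop) (fun x => by
      rw [mul_comm]; exact mul_le_mul_of_nonneg_right (abs_halfDiv_le hn x) (jbPow_pos s x).le) u
  calc weightedNorm s (morawetz u)
      ≤ ∑ j, weightedNorm s (mulFun (fun x => x j * jbPow (-1) x) (pderiv j u)) +
          weightedNorm s (mulFun halfDiv u) := by
        simp only [weightedNorm, morawetz, map_add, map_sum]
        exact (norm_add_le _ _).trans (add_le_add_left (norm_sum_le _ _) _)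
    _ ≤ ∑ j, weightedNorm s (pderiv j u) + n * weightedNorm s u :=
        add_le_add (Finset.sum_le_sum fun j _ => (hfield j).trans_eq (one_mul _)) hdiv
    _ ≤ n * (gradNorm s u + weightedNorm s u) := by
        rw [mul_add]; exact add_le_add_left (sum_weightedNorm_pderiv_le s u) _

lemma inner_freeOp (z : ℂ) (v u : 𝓢(Euc n, ℂ)) :
    inner ℂ (toL2 v) (toL2 (freeOp z u)) =
      ∑ k, inner ℂ (toL2 (pderiv k v)) (toL2 (pderiv k u)) -
        z * inner ℂ (toL2 v) (toL2 u) := by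
  simp only [freeOp, laplacian_eq_sum_pderiv, map_sub, map_neg, map_sum, map_smul,
    inner_sub_right, inner_neg_right, inner_sum, inner_smul_right, inner_pderiv_right,
    Finset.sum_neg_distrib, neg_neg]

lemma inner_toL2_self (u : 𝓢(Euc n, ℂ)) :
    inner ℂ (toL2 u) (toL2 u) = ((‖toL2 u‖ ^ 2 : ℝ) : ℂ) := by
  rw [inner_self_eq_norm_sq_to_K]; push_cast; rfl

lemma gradNorm_sq_le (hn : 3 ≤ n) (z : ℂ) (u : 𝓢(Euc n, ℂ)) :
    gradNorm (-3 / 2) u ^ 2 ≤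
      n * (gradNorm (-3 / 2) u + weightedNorm (-3 / 2) u) * weightedNorm (3 / 2) (freeOp z u) +
        |z.im| * (n * (gradNorm 0 u + weightedNorm 0 u) * weightedNorm 0 u) := by
  have hsource : (inner ℂ (toL2 (morawetz u)) (toL2 (freeOp z u))).re ≤
      n * (gradNorm (-3 / 2) u + weightedNorm (-3 / 2) u) * weightedNorm (3 / 2) (freeOp z u) := by
    refine (Complex.re_le_norm _).trans ((norm_inner_le_jbPow (3 / 2) _ _).trans ?_)
    rw [← neg_div]
    exact mul_le_mul_of_nonneg_right (weightedNorm_morawetz_le (by lia) _ u) (norm_nonneg _)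
  have hspectral : (z * inner ℂ (toL2 (morawetz u)) (toL2 u)).re ≤
      |z.im| * (n * (gradNorm 0 u + weightedNorm 0 u) * weightedNorm 0 u) := by
    rw [Complex.mul_re, re_inner_morawetz_self, mul_zero, zero_sub]
    calc -(z.im * (inner ℂ (toL2 (morawetz u)) (toL2 u)).im)
        ≤ |z.im| * |(inner ℂ (toL2 (morawetz u)) (toL2 u)).im| :=
          (neg_le_abs _).trans_eq (abs_mul _ _)
      _ ≤ |z.im| * (weightedNorm 0 (morawetz u) * weightedNorm 0 u) := by
          simp only [weightedNorm_zero]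
          gcongr
          exact (Complex.abs_im_le_norm _).trans (norm_inner_le_norm _ _)
      _ ≤ _ := by
          gcongr
          · exact weightedNorm_nonneg _ _
          · exact weightedNorm_morawetz_le (by lia) 0 u
  have hmorawetz := sum_norm_sq_le_re_inner_morawetz hn u
  rw [show -(Δ u) = freeOp z u + z • u by unfold freeOp; abel, map_add, map_smul,
    inner_add_right, inner_smul_right, Complex.add_re] at hmorawetz
  rw [gradNorm_sq]
  exact hmorawetz.trans (add_le_add hsource hspectral)

lemma inner_mulFun_jbPow_neg_three (u v : 𝓢(Euc n, ℂ)) :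
    inner ℂ (toL2 (mulFun (jbPow (-3)) u)) (toL2 v) =
      inner ℂ (toL2 (mulFun (jbPow (-3 / 2)) u)) (toL2 (mulFun (jbPow (-3 / 2)) v)) := by
  rw [← inner_mulFun_left (by fun_prop), mulFun_jbPow_jbPow]
  norm_num

lemma re_inner_pderiv_mulFun_jbPow_le (k : Fin n) (u : 𝓢(Euc n, ℂ)) :
    (inner ℂ (toL2 (pderiv k (mulFun (jbPow (-3)) u))) (toL2 (pderiv k u))).re ≤
      weightedNorm (-3 / 2) (pderiv k u) ^ 2 +
        3 * weightedNorm (-3 / 2) u * weightedNorm (-3 / 2) (pderiv k u) := by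
  have hderiv (x : Euc n) : fderiv ℝ (jbPow (-3)) x (EuclideanSpace.single k 1) =
      -3 * (x k * jbPow (-5) x) := by
    rw [fderiv_jbPow]; norm_num
  have hcomm : weightedNorm (3 / 2) (mulFun (fun x => -3 * (x k * jbPow (-5) x)) u) ≤
      3 * weightedNorm (-3 / 2) u := by
    refine weightedNorm_mulFun_le (by fun_prop) (fun x => ?_) u
    rw [abs_mul, abs_mul, abs_of_pos (jbPow_pos _ x)]
    calc jbPow (3 / 2) x * (|-3| * (|x k| * jbPow (-5) x))
        ≤ jbPow (3 / 2) x * (3 * jbPow (-5 + 1) x) := by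
          rw [abs_neg, Nat.abs_ofNat]
          gcongr
          · exact (jbPow_pos _ x).le
          · exact abs_coord_mul_jbPow_le k (-5) x
      _ = 3 * jbPow (-5 / 2) x := by rw [mul_left_comm, jbPow_mul_jbPow]; norm_num
      _ ≤ 3 * jbPow (-3 / 2) x := by
          gcongr
          exact Real.rpow_le_rpow_of_exponent_le (one_le_jb x) (by norm_num)
  rw [pderiv_mulFun (by fun_prop) (by fun_prop) k hderiv, map_add, inner_add_left,
    inner_mulFun_jbPow_neg_three, inner_toL2_self, Complex.add_re, Complex.ofReal_re]
  refine add_le_add_right ((Complex.re_le_norm _).trans ?_) _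
  rw [norm_inner_symm]
  refine (norm_inner_le_jbPow (3 / 2) _ _).trans ?_
  rw [← neg_div, mul_comm]
  exact mul_le_mul_of_nonneg_right hcomm (norm_nonneg _)

/-- The real part of the pairing of `(-Δ - z) u` with `⟨x⟩⁻³ u`. -/
lemma re_mul_weightedNorm_sq_le (z : ℂ) (u : 𝓢(Euc n, ℂ)) :
    z.re * weightedNorm (-3 / 2) u ^ 2 ≤
      gradNorm (-3 / 2) u ^ 2 + 3 * n * weightedNorm (-3 / 2) u * gradNorm (-3 / 2) u +
        weightedNorm (-3 / 2) u * weightedNorm (3 / 2) (freeOp z u) := by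
  have hpair := congrArg Complex.re (inner_freeOp z (mulFun (jbPow (-3)) u) u)
  rw [Complex.sub_re, Complex.re_sum, inner_mulFun_jbPow_neg_three u u, inner_toL2_self,
    Complex.re_mul_ofReal] at hpair
  have hsource : -(inner ℂ (toL2 (mulFun (jbPow (-3)) u)) (toL2 (freeOp z u))).re ≤
      weightedNorm (-3 / 2) u * weightedNorm (3 / 2) (freeOp z u) := by
    refine (neg_le_abs _).trans ((Complex.abs_re_le_norm _).trans
      ((norm_inner_le_jbPow (3 / 2) _ _).trans ?_))
    refine mul_le_mul_of_nonneg_right ?_ (norm_nonneg _)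
    rw [← one_mul (weightedNorm _ _)]
    refine weightedNorm_mulFun_le (by fun_prop) (fun x => ?_) u
    rw [abs_of_pos (jbPow_pos _ x), jbPow_mul_jbPow, one_mul]
    exact Real.rpow_le_rpow_of_exponent_le (one_le_jb x) (by norm_num)
  have hgrad := Finset.sum_le_sum fun k (_ : k ∈ Finset.univ) =>
    re_inner_pderiv_mulFun_jbPow_le k u
  rw [Finset.sum_add_distrib, ← Finset.mul_sum, ← gradNorm_sq] at hgrad
  have hsum := mul_le_mul_of_nonneg_left (sum_weightedNorm_pderiv_le (-3 / 2) u)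
    (weightedNorm_nonneg (-3 / 2) u)
  unfold weightedNorm at *
  linarith

lemma abs_im_mul_weightedNorm_sq_le (z : ℂ) (u : 𝓢(Euc n, ℂ)) :
    |z.im| * weightedNorm 0 u ^ 2 ≤
      weightedNorm (-3 / 2) u * weightedNorm (3 / 2) (freeOp z u) := by
  have hpair := (Complex.abs_im_le_norm _).trans (norm_inner_le_jbPow (3 / 2) u (freeOp z u))
  rw [inner_freeOp, Complex.sub_im, Complex.im_sum] at hpair
  simpa only [inner_toL2_self, Complex.ofReal_im, Finset.sum_const_zero, zero_sub,
    Complex.im_mul_ofReal, abs_neg, abs_mul, abs_of_nonneg (sq_nonneg ‖toL2 u‖),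
    weightedNorm_zero, neg_div] using! hpair

lemma gradNorm_zero_sq_le (z : ℂ) (u : 𝓢(Euc n, ℂ)) :
    gradNorm 0 u ^ 2 ≤ z.re * weightedNorm 0 u ^ 2 +
      weightedNorm (-3 / 2) u * weightedNorm (3 / 2) (freeOp z u) := by
  have hpair := (Complex.re_le_norm _).trans (norm_inner_le_jbPow (3 / 2) u (freeOp z u))
  rw [inner_freeOp, Complex.sub_re, Complex.re_sum] at hpair
  simp only [inner_toL2_self, Complex.ofReal_re, Complex.re_mul_ofReal] at hpair
  rw [gradNorm_sq, ← sub_le_iff_le_add']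
  simpa only [weightedNorm_zero, neg_div] using! hpair

end WeightedResolventEstimate

section Absorption

variable {m U F G N D e s a b X P : ℝ}

lemma mul_mul_le_of_energy (he : 0 ≤ e) (he1 : e ≤ 1) (hs : 1 ≤ s) (hP : 0 ≤ P)
    (hN : e * N ^ 2 ≤ P) (hD : D ^ 2 ≤ s ^ 2 * N ^ 2 + P) : e * (D * N) ≤ 2 * s * P := by
  have hs2 : 1 ≤ s ^ 2 := one_le_pow₀ hs
  have heD : e * D ^ 2 ≤ 2 * s ^ 2 * P := by nlinarith
  refine le_of_sq_le_sq ?_ (by positivity)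
  calc (e * (D * N)) ^ 2 = (e * N ^ 2) * (e * D ^ 2) := by ring
    _ ≤ P * (2 * s ^ 2 * P) := by gcongr
    _ ≤ (2 * s * P) ^ 2 := by nlinarith [mul_nonneg (sq_nonneg s) (sq_nonneg P)]

lemma sq_le_of_morawetz (hm : 0 ≤ m) (hs : 1 ≤ s) (hUF : 0 ≤ U * F)
    (hN : e * N ^ 2 ≤ U * F) (hDN : e * (D * N) ≤ 2 * s * (U * F))
    (hG : G ^ 2 ≤ m * (G + U) * F + e * (m * (D + N) * N)) :
    G ^ 2 ≤ m ^ 2 * F ^ 2 + 8 * m * (s * U * F) := by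
  have hsUF : U * F ≤ s * U * F := by nlinarith
  have hlin : G ^ 2 ≤ m * G * F + 4 * (m * (s * U * F)) := by
    calc G ^ 2 ≤ m * G * F + m * (U * F + e * (D * N) + e * N ^ 2) := hG.trans_eq (by ring)
      _ ≤ m * G * F + m * (4 * (s * U * F)) := by gcongr; linarith
      _ = _ := by ring
  nlinarith [sq_nonneg (G - m * F)]

lemma sq_le_of_weighted_energy (hU : 0 ≤ U) (hs : 1 ≤ s)
    (hX : s ^ 2 * U ^ 2 ≤ G ^ 2 + 3 * m * U * G + U * F) :
    (s * U) ^ 2 ≤ 2 * (1 + 9 * m ^ 2) * G ^ 2 + 2 * F ^ 2 := by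
  have hUs : U ^ 2 ≤ (s * U) ^ 2 := by gcongr; nlinarith
  nlinarith [sq_nonneg (U / 2 - 3 * m * G), sq_nonneg (U / 2 - F)]

lemma le_add_mul_of_sq_le (ha : 1 ≤ a) (hb : 0 ≤ b) (hF : 0 ≤ F)
    (h : X ^ 2 ≤ a * F ^ 2 + b * (X * F)) : X ≤ (a + b) * F := by
  by_contra! hlt
  have ha0 : 0 ≤ a := zero_le_one.trans ha
  have hFX : F ≤ X := by nlinarith
  have hX : 0 < X := (by positivity : 0 ≤ (a + b) * F).trans_lt hlt
  nlinarith [mul_lt_mul_of_pos_left hlt hX, mul_le_mul_of_nonneg_left hFX (mul_nonneg ha0 hF)]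

end Absorption

/-- Limiting absorption on Schwartz functions: the `z`-dependence of the right-hand side is only
through `(-Δ - z) u`, so the bound survives the limit `z.im → 0`. -/
lemma sqrt_re_mul_weightedNorm_le {n : ℕ} (hn : 3 ≤ n) {z : ℂ} (hre : 1 ≤ z.re)
    (him : |z.im| ≤ 1) (u : 𝓢(Euc n, ℂ)) :
    √z.re * weightedNorm (-3 / 2) u ≤ lapConst n * weightedNorm (3 / 2) (freeOp z u) := by
  set U := weightedNorm (-3 / 2) u
  set F := weightedNorm (3 / 2) (freeOp z u)
  have hU : 0 ≤ U := weightedNorm_nonneg _ u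
  have hF : 0 ≤ F := weightedNorm_nonneg _ _
  have hs : 1 ≤ √z.re := Real.one_le_sqrt.2 hre
  have hs2 : √z.re ^ 2 = z.re := Real.sq_sqrt (zero_le_one.trans hre)
  have hN := abs_im_mul_weightedNorm_sq_le z u
  have hDN := mul_mul_le_of_energy (abs_nonneg _) him hs (mul_nonneg hU hF) hN
    (hs2.symm ▸ gradNorm_zero_sq_le z u)
  have hG := sq_le_of_morawetz (Nat.cast_nonneg n) hs (mul_nonneg hU hF) hN hDN
    (gradNorm_sq_le hn z u)
  have hX := sq_le_of_weighted_energy hU hs (hs2.symm ▸ re_mul_weightedNorm_sq_le z u)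
  refine le_add_mul_of_sq_le (le_add_of_nonneg_of_le (by positivity) one_le_two)
    (by positivity) hF (hX.trans ?_)
  nlinarith [mul_le_mul_of_nonneg_left hG (by positivity : 0 ≤ 1 + 9 * (n : ℝ) ^ 2)]

/-! ### Resolvents in the functional calculus -/

/-- The function `x ↦ (x - z)⁻¹` on the real line, whose image under the functional calculus of a
self-adjoint operator `T` is the resolvent `(T - z)⁻¹`. -/
def resolventFun (z : ℂ) (x : ℝ) : ℂ := ((x : ℂ) - z)⁻¹

lemma abs_im_le_norm_ofReal_sub (z : ℂ) (x : ℝ) : |z.im| ≤ ‖(x : ℂ) - z‖ := by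
  simpa using Complex.abs_im_le_norm ((x : ℂ) - z)

lemma abs_sub_re_le_norm_ofReal_sub (z : ℂ) (x : ℝ) : |x - z.re| ≤ ‖(x : ℂ) - z‖ := by
  simpa using Complex.abs_re_le_norm ((x : ℂ) - z)

lemma ofReal_sub_ne_zero {z : ℂ} (hz : z.im ≠ 0) (x : ℝ) : (x : ℂ) - z ≠ 0 :=
  norm_pos_iff.1 ((abs_pos.2 hz).trans_le (abs_im_le_norm_ofReal_sub z x))

@[fun_prop]
lemma measurable_resolventFun (z : ℂ) : Measurable (resolventFun z) := by
  unfold resolventFun; fun_prop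

lemma norm_resolventFun_le {z : ℂ} (hz : z.im ≠ 0) (x : ℝ) : ‖resolventFun z x‖ ≤ |z.im|⁻¹ := by
  rw [resolventFun, norm_inv]
  exact inv_anti₀ (abs_pos.2 hz) (abs_im_le_norm_ofReal_sub z x)

lemma resolventFun_bounded {z : ℂ} (hz : z.im ≠ 0) : ∃ M, ∀ x, ‖resolventFun z x‖ ≤ M :=
  ⟨_, norm_resolventFun_le hz⟩

lemma resolventFun_mul_bounded {z w : ℂ} (hz : z.im ≠ 0) (hw : w.im ≠ 0) :
    ∃ M, ∀ x, ‖resolventFun z x * resolventFun w x‖ ≤ M :=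
  ⟨_, fun x => (norm_mul _ _).trans_le (mul_le_mul (norm_resolventFun_le hz x)
    (norm_resolventFun_le hw x) (norm_nonneg _) (by positivity))⟩

lemma resolventFun_eq_add {z w : ℂ} (hz : z.im ≠ 0) (hw : w.im ≠ 0) (x : ℝ) :
    resolventFun z x = (z - w) * (resolventFun z x * resolventFun w x) + resolventFun w x := by
  have hz' := ofReal_sub_ne_zero hz x
  have hw' := ofReal_sub_ne_zero hw x
  simp only [resolventFun]
  field_simp
  ring

section SelfAdjoint

variable {H : Type*} [NormedAddCommGroup H] [InnerProductSpace ℂ H] [CompleteSpace H]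
  {T : H →ₗ.[ℂ] H}

lemma inner_apply_eq_of_isSelfAdjoint (hT : IsSelfAdjoint T) (u v : T.domain) :
    inner ℂ (T u) (v : H) = inner ℂ (u : H) (T v) := by
  have hadj := LinearPMap.adjoint_isFormalAdjoint hT.dense_domain
  rw [LinearPMap.isSelfAdjoint_def.1 hT] at hadj
  exact hadj u v

lemma eq_zero_of_isSelfAdjoint_of_apply_eq_smul (hT : IsSelfAdjoint T) {z : ℂ} (hz : z.im ≠ 0)
    {u : T.domain} (hu : T u = z • (u : H)) : (u : H) = 0 := by
  have hsymm := inner_apply_eq_of_isSelfAdjoint hT u u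
  rw [hu, inner_smul_left, inner_smul_right] at hsymm
  refine inner_self_eq_zero.1 ((mul_eq_mul_right_iff.1 hsymm).resolve_left fun hconj => hz ?_)
  exact Complex.conj_eq_iff_im.1 hconj

end SelfAdjoint

namespace IsBorelFunctionalCalculus

variable {n : ℕ} {T : L2 n →ₗ.[ℂ] L2 n} {fc : (ℝ → ℂ) → (L2 n →L[ℂ] L2 n)} {z w : ℂ}

lemma resolvent_apply_sub (hfc : IsBorelFunctionalCalculus T fc) (hT : IsSelfAdjoint T)
    (hz : z.im ≠ 0) (u : T.domain) : fc (resolventFun z) (T u - z • (u : L2 n)) = u := by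
  obtain ⟨v, hv, hTv⟩ := hfc.resolvent z hz (T u - z • (u : L2 n))
  have hvu : ((v - u : T.domain) : L2 n) = 0 := by
    refine eq_zero_of_isSelfAdjoint_of_apply_eq_smul hT hz ?_
    rw [LinearPMap.map_sub, hTv, Submodule.coe_sub, smul_sub]
    abel
  rw [Submodule.coe_sub, sub_eq_zero] at hvu
  exact hv.symm.trans hvu

lemma denseRange_resolvent (hfc : IsBorelFunctionalCalculus T fc) (hT : IsSelfAdjoint T)
    (hz : z.im ≠ 0) : DenseRange (fc (resolventFun z)) :=
  hT.dense_domain.mono fun u hu => ⟨_, hfc.resolvent_apply_sub hT hz ⟨u, hu⟩⟩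

lemma resolvent_sub_resolvent (hfc : IsBorelFunctionalCalculus T fc) (hT : IsSelfAdjoint T)
    (hz : z.im ≠ 0) (hw : w.im ≠ 0) :
    fc (resolventFun z) - fc (resolventFun w) =
      (z - w) • (fc (resolventFun z)).comp (fc (resolventFun w)) := by
  ext1 u
  obtain ⟨v, hv, hTv⟩ := hfc.resolvent w hw u
  have hinv := hfc.resolvent_apply_sub hT hz v
  rw [show T v - z • (v : L2 n) = u - (z - w) • (v : L2 n) by rw [hTv, sub_smul]; abel,
    map_sub, map_smul, sub_eq_iff_eq_add, ← sub_eq_iff_eq_add', hv] at hinv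
  exact hinv

/-- The calculus is only assumed additive and multiplicative; complex homogeneity follows by
comparing the two ways of writing the first resolvent identity for `z - w = c`. -/
lemma map_const (hfc : IsBorelFunctionalCalculus T fc) (hT : IsSelfAdjoint T) (c : ℂ) :
    fc (fun _ => c) = c • ContinuousLinearMap.id ℂ (L2 n) := by
  obtain ⟨w, hw, hz⟩ : ∃ w : ℂ, w.im ≠ 0 ∧ (w + c).im ≠ 0 := by
    have hlow := neg_abs_le c.im
    exact ⟨⟨0, |c.im| + 1⟩, by positivity, (show 0 < |c.im| + 1 + c.im by linarith).ne'⟩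
  set z := w + c
  have hprod : Measurable fun x => resolventFun z x * resolventFun w x := by fun_prop
  obtain ⟨M, hM⟩ := resolventFun_mul_bounded hz hw
  have hmul : fc (resolventFun z) =
      (fc fun _ => c).comp ((fc (resolventFun z)).comp (fc (resolventFun w))) +
        fc (resolventFun w) := by
    rw [← hfc.map_mul _ _ (by fun_prop) (by fun_prop) (resolventFun_bounded hz)
      (resolventFun_bounded hw), ← hfc.map_mul _ _ measurable_const hprod ⟨‖c‖, fun _ => le_rfl⟩
      ⟨M, hM⟩, ← hfc.map_add _ _ (by fun_prop) (by fun_prop) ⟨‖c‖ * M, fun x => ?_⟩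
      (resolventFun_bounded hw)]
    · congr 1; ext x
      exact (resolventFun_eq_add hz hw x).trans (by rw [add_sub_cancel_left])
    · rw [norm_mul]; gcongr; exact hM x
  have hdense : DenseRange (fc (resolventFun z) ∘ fc (resolventFun w)) :=
    (hfc.denseRange_resolvent hT hz).comp (hfc.denseRange_resolvent hT hw)
      (fc (resolventFun z)).continuous
  refine ContinuousLinearMap.coeFn_injective (hdense.equalizer (fc fun _ => c).continuous
    (continuous_const_smul c) (funext fun u => ?_))
  have hres := (sub_eq_of_eq_add hmul).symm.trans (hfc.resolvent_sub_resolvent hT hz hw)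
  rw [add_sub_cancel_left] at hres
  exact DFunLike.congr_fun hres u

lemma map_const_mul (hfc : IsBorelFunctionalCalculus T fc) (hT : IsSelfAdjoint T) (c : ℂ)
    {f : ℝ → ℂ} (hf : Measurable f) (hb : ∃ M, ∀ x, ‖f x‖ ≤ M) :
    fc (fun x => c * f x) = c • fc f := by
  rw [hfc.map_mul (fun _ => c) f measurable_const hf ⟨‖c‖, fun _ => le_rfl⟩ hb,
    hfc.map_const hT, ContinuousLinearMap.smul_comp, ContinuousLinearMap.id_comp]

/-- The functional calculus as a bounded linear map on bounded continuous functions. -/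
def bcfMap (hfc : IsBorelFunctionalCalculus T fc) (hT : IsSelfAdjoint T) :
    BoundedContinuousFunction ℝ ℂ →L[ℂ] (L2 n →L[ℂ] L2 n) :=
  LinearMap.mkContinuous
    { toFun := fun f => fc f
      map_add' := fun f g => hfc.map_add f g f.continuous.measurable g.continuous.measurable
        ⟨_, f.norm_coe_le_norm⟩ ⟨_, g.norm_coe_le_norm⟩
      map_smul' := fun c f =>
        hfc.map_const_mul hT c f.continuous.measurable ⟨_, f.norm_coe_le_norm⟩ }
    1 fun f => by
      rw [one_mul]
      exact hfc.norm_le f _ f.continuous.measurable f.norm_coe_le_norm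

lemma norm_resolvent_le (hfc : IsBorelFunctionalCalculus T fc) (hz : z.im ≠ 0) :
    ‖fc (resolventFun z)‖ ≤ |z.im|⁻¹ :=
  hfc.norm_le _ _ (measurable_resolventFun z) (norm_resolventFun_le hz)

lemma adjoint_resolvent (hfc : IsBorelFunctionalCalculus T fc) (hT : IsSelfAdjoint T)
    (hz : z.im ≠ 0) : (fc (resolventFun z)).adjoint = fc (resolventFun (conj z)) := by
  refine ((ContinuousLinearMap.eq_adjoint_iff _ _).2 fun u v => ?_).symm
  obtain ⟨a, ha, hTa⟩ := hfc.resolvent (conj z) (by simpa using hz) u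
  obtain ⟨b, hb, hTb⟩ := hfc.resolvent z hz v
  have hsymm := inner_apply_eq_of_isSelfAdjoint hT a b
  rw [hTa, hTb, inner_add_left, inner_add_right, inner_smul_left, inner_smul_right,
    Complex.conj_conj] at hsymm
  change inner ℂ (fc (fun x => ((x : ℂ) - conj z)⁻¹) u) v =
    inner ℂ u (fc (fun x => ((x : ℂ) - z)⁻¹) v)
  rw [← ha, ← hb]
  exact (add_left_cancel hsymm).symm

lemma continuousAt_resolvent (hfc : IsBorelFunctionalCalculus T fc) (hT : IsSelfAdjoint T)
    (hz : z.im ≠ 0) : ContinuousAt (fun w => fc (resolventFun w)) z := by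
  have hpos : 0 < |z.im| := abs_pos.2 hz
  have hlim : Tendsto (fun w : ℂ => ‖w - z‖ * ((|z.im| / 2)⁻¹ * |z.im|⁻¹)) (𝓝 z) (𝓝 0) := by
    have hcont : Continuous fun w : ℂ => ‖w - z‖ * ((|z.im| / 2)⁻¹ * |z.im|⁻¹) := by fun_prop
    simpa using hcont.tendsto z
  rw [ContinuousAt, tendsto_iff_norm_sub_tendsto_zero]
  refine squeeze_zero' (Eventually.of_forall fun _ => norm_nonneg _) ?_ hlim
  filter_upwards [(Complex.continuous_im.abs.tendsto z).eventually
    (lt_mem_nhds (half_lt_self hpos))] with w hw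
  have hw0 : w.im ≠ 0 := abs_pos.1 ((half_pos hpos).trans hw)
  rw [hfc.resolvent_sub_resolvent hT hw0 hz, norm_smul]
  gcongr
  refine (ContinuousLinearMap.opNorm_comp_le _ _).trans ?_
  gcongr
  · exact (hfc.norm_resolvent_le hw0).trans (inv_anti₀ (half_pos hpos) hw.le)
  · exact hfc.norm_resolvent_le hz

lemma differentiableAt_resolvent (hfc : IsBorelFunctionalCalculus T fc) (hT : IsSelfAdjoint T)
    (hz : z.im ≠ 0) : DifferentiableAt ℂ (fun w => fc (resolventFun w)) z := by
  suffices HasDerivAt (fun w => fc (resolventFun w))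
      ((fc (resolventFun z)).comp (fc (resolventFun z))) z from this.differentiableAt
  rw [hasDerivAt_iff_tendsto_slope]
  have hlim : Tendsto (fun w => (fc (resolventFun w)).comp (fc (resolventFun z))) (𝓝[≠] z)
      (𝓝 ((fc (resolventFun z)).comp (fc (resolventFun z)))) :=
    ((hfc.continuousAt_resolvent hT hz).clm_comp continuousAt_const).tendsto.mono_left
      nhdsWithin_le_nhds
  refine hlim.congr' ?_
  have hne : ∀ᶠ w : ℂ in 𝓝[≠] z, w.im ≠ 0 :=
    ((Complex.continuous_im.tendsto z).eventually_ne hz).filter_mono nhdsWithin_le_nhds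
  filter_upwards [hne, self_mem_nhdsWithin] with w hw hwz
  rw [slope_def_module, hfc.resolvent_sub_resolvent hT hw hz, smul_smul,
    inv_mul_cancel₀ (sub_ne_zero.2 hwz), one_smul]

end IsBorelFunctionalCalculus

/-! ### Poisson kernels and spectral densities -/

/-- The Poisson kernel of the upper half-plane (without the factor `π⁻¹`), at height `e` and
centred at `l`. Negative `e` is allowed and flips the sign. -/
def lorentzian (e l x : ℝ) : ℝ := e / ((x - l) ^ 2 + e ^ 2)

lemma abs_lorentzian (e l x : ℝ) : |lorentzian e l x| = lorentzian |e| l x := by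
  have hden : 0 ≤ (x - l) ^ 2 + e ^ 2 := by positivity
  rw [lorentzian, lorentzian, abs_div, sq_abs, abs_of_nonneg hden]

lemma continuous_lorentzian {e : ℝ} (he : e ≠ 0) :
    Continuous fun p : ℝ × ℝ => lorentzian e p.1 p.2 := by
  unfold lorentzian
  exact continuous_const.div (by fun_prop) fun p => by positivity

lemma lorentzian_eq_mul (e l x : ℝ) :
    (lorentzian e l x : ℂ) = e * (resolventFun ⟨l, -e⟩ x * resolventFun ⟨l, e⟩ x) := by
  have hden : ((x : ℂ) - ⟨l, -e⟩) * ((x : ℂ) - ⟨l, e⟩) = (((x - l) ^ 2 + e ^ 2 : ℝ) : ℂ) := by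
    apply Complex.ext
    · rw [Complex.ofReal_re]; simp; ring
    · rw [Complex.ofReal_im]; simp; ring
  rw [lorentzian, resolventFun, resolventFun, ← mul_inv, hden, Complex.ofReal_div, div_eq_mul_inv]

lemma lorentzian_eq_im (e l x : ℝ) : lorentzian e l x = (resolventFun ⟨l, e⟩ x).im := by
  rw [lorentzian, resolventFun, Complex.inv_im, Complex.normSq_apply]
  simp
  ring

lemma abs_lorentzian_le (e l x : ℝ) : |lorentzian e l x| ≤ |e|⁻¹ := by
  rcases eq_or_ne e 0 with rfl | he
  · simp [lorentzian]
  · rw [lorentzian_eq_im]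
    exact (Complex.abs_im_le_norm _).trans (norm_resolventFun_le he x)

lemma abs_lorentzian_sub_le (e l m x : ℝ) :
    |lorentzian e l x - lorentzian e m x| ≤ |l - m| * (|e|⁻¹ * |e|⁻¹) := by
  rcases eq_or_ne e 0 with rfl | he
  · simp [lorentzian]
  have hl := norm_resolventFun_le (z := ⟨l, e⟩) he x
  have hm := norm_resolventFun_le (z := ⟨m, e⟩) he x
  have hlm : (⟨l, e⟩ : ℂ) - ⟨m, e⟩ = ((l - m : ℝ) : ℂ) := by apply Complex.ext <;> simp
  rw [lorentzian_eq_im, lorentzian_eq_im, ← Complex.sub_im]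
  refine (Complex.abs_im_le_norm _).trans ?_
  rw [sub_eq_of_eq_add (resolventFun_eq_add (z := ⟨l, e⟩) (w := ⟨m, e⟩) he he x), hlm, norm_mul,
    norm_mul, Complex.norm_real, Real.norm_eq_abs]
  gcongr

lemma integral_lorentzian_le {e : ℝ} (he : e ≠ 0) (x a b : ℝ) :
    ∫ l in a..b, lorentzian e l x ≤ π := by
  have hderiv : ∀ l, HasDerivAt (fun l => Real.arctan ((l - x) / e)) (lorentzian e l x) l := by
    intro l
    convert ((hasDerivAt_sub_const_iff x).2 (hasDerivAt_id' l) |>.div_const e).arctan using 1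
    have hden : (x - l) ^ 2 + e ^ 2 ≠ 0 := by positivity
    rw [lorentzian]
    field_simp
    ring
  have hcont : Continuous fun l => lorentzian e l x :=
    (continuous_lorentzian he).comp (continuous_id.prodMk continuous_const)
  rw [intervalIntegral.integral_eq_sub_of_hasDerivAt (fun l _ => hderiv l)
    (hcont.intervalIntegrable _ _)]
  linarith [Real.arctan_lt_pi_div_two ((b - x) / e), Real.neg_pi_div_two_lt_arctan ((a - x) / e)]

/-- The Poisson kernel as a bounded continuous function of the point. -/
def lorentzianBCF (e l : ℝ) : BoundedContinuousFunction ℝ ℂ :=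
  BoundedContinuousFunction.ofNormedAddCommGroup (fun x => (lorentzian e l x : ℂ))
    (by
      rcases eq_or_ne e 0 with rfl | he
      · simpa [lorentzian] using continuous_const
      · exact Complex.continuous_ofReal.comp
          ((continuous_lorentzian he).comp (continuous_const.prodMk continuous_id)))
    |e|⁻¹ fun x => by
      rw [Complex.norm_real]
      exact abs_lorentzian_le e l x

lemma lorentzianBCF_apply (e l x : ℝ) : lorentzianBCF e l x = (lorentzian e l x : ℂ) := rfl

lemma continuous_lorentzianBCF (e : ℝ) : Continuous (lorentzianBCF e) := by
  refine (LipschitzWith.of_dist_le_mul (K := (|e|⁻¹ * |e|⁻¹).toNNReal) fun l m => ?_).continuous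
  rw [BoundedContinuousFunction.dist_le (by positivity)]
  intro x
  rw [lorentzianBCF_apply, lorentzianBCF_apply, Complex.dist_of_im_eq (by simp), Complex.ofReal_re,
    Complex.ofReal_re, Real.dist_eq, Real.dist_eq, Real.coe_toNNReal _ (by positivity), mul_comm]
  exact abs_lorentzian_sub_le e l m x

lemma integral_smul_lorentzianBCF_apply {f : ℝ → ℂ} (hf : Continuous f) (e a b x : ℝ) :
    (∫ l in a..b, f l • lorentzianBCF e l) x = ∫ l in a..b, f l * (lorentzian e l x : ℂ) :=
  ((BoundedContinuousFunction.evalCLM ℂ x).intervalIntegral_comp_comm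
    ((hf.smul (continuous_lorentzianBCF e)).intervalIntegrable a b)).symm

lemma norm_integral_smul_lorentzianBCF_le {f : ℝ → ℂ} (hf : Continuous f) {M : ℝ}
    (hM : ∀ x, ‖f x‖ ≤ M) {e : ℝ} (he : e ≠ 0) {a b : ℝ} (hab : a ≤ b) :
    ‖∫ l in a..b, f l • lorentzianBCF e l‖ ≤ M * π := by
  have hM0 : 0 ≤ M := (norm_nonneg _).trans (hM 0)
  rw [BoundedContinuousFunction.norm_le (by positivity)]
  intro x
  have hcont : Continuous fun l => lorentzian |e| l x :=
    (continuous_lorentzian (abs_ne_zero.2 he)).comp (continuous_id.prodMk continuous_const)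
  calc ‖(∫ l in a..b, f l • lorentzianBCF e l) x‖
      = ‖∫ l in a..b, f l * (lorentzian e l x : ℂ)‖ := by
        rw [integral_smul_lorentzianBCF_apply hf]
    _ ≤ ∫ l in a..b, M * lorentzian |e| l x := by
        refine intervalIntegral.norm_integral_le_of_norm_le hab (Eventually.of_forall fun l _ => ?_)
          (Continuous.intervalIntegrable (by fun_prop) _ _)
        rw [norm_mul, Complex.norm_real, Real.norm_eq_abs, abs_lorentzian]
        exact mul_le_mul_of_nonneg_right (hM l) ((abs_nonneg _).trans_eq (abs_lorentzian e l x))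
    _ ≤ M * π := by
        rw [intervalIntegral.integral_const_mul]
        exact mul_le_mul_of_nonneg_left (integral_lorentzian_le (abs_ne_zero.2 he) x a b) hM0

namespace IsBorelFunctionalCalculus

variable {n : ℕ} {T : L2 n →ₗ.[ℂ] L2 n} {fc : (ℝ → ℂ) → (L2 n →L[ℂ] L2 n)} {e : ℝ}

lemma bcfMap_lorentzianBCF (hfc : IsBorelFunctionalCalculus T fc) (hT : IsSelfAdjoint T)
    (he : e ≠ 0) (l : ℝ) :
    hfc.bcfMap hT (lorentzianBCF e l) =
      (e : ℂ) • (fc (resolventFun ⟨l, -e⟩)).comp (fc (resolventFun ⟨l, e⟩)) := by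
  have hm : (⟨l, -e⟩ : ℂ).im ≠ 0 := neg_ne_zero.2 he
  rw [← hfc.map_mul _ _ (by fun_prop) (by fun_prop) (resolventFun_bounded hm)
    (resolventFun_bounded he), ← hfc.map_const_mul hT _ (by fun_prop)
    (resolventFun_mul_bounded hm he)]
  exact congrArg fc (funext (lorentzian_eq_mul e l))

lemma resolvent_jump (hfc : IsBorelFunctionalCalculus T fc) (hT : IsSelfAdjoint T)
    (he : e ≠ 0) (l : ℝ) :
    fc (resolventFun ⟨l, e⟩) - fc (resolventFun ⟨l, -e⟩) =
      (2 * Complex.I) • hfc.bcfMap hT (lorentzianBCF e l) := by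
  have hm : (⟨l, -e⟩ : ℂ).im ≠ 0 := neg_ne_zero.2 he
  rw [← neg_sub, hfc.resolvent_sub_resolvent hT hm he, hfc.bcfMap_lorentzianBCF hT he, smul_smul,
    ← neg_smul]
  congr 1
  apply Complex.ext <;> simp
  ring

lemma inner_bcfMap_lorentzianBCF (hfc : IsBorelFunctionalCalculus T fc) (hT : IsSelfAdjoint T)
    (he : e ≠ 0) (l : ℝ) (u : L2 n) :
    inner ℂ u (hfc.bcfMap hT (lorentzianBCF e l) u) =
      ((e * ‖fc (resolventFun ⟨l, e⟩) u‖ ^ 2 : ℝ) : ℂ) := by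
  have hadj : (fc (resolventFun ⟨l, e⟩)).adjoint = fc (resolventFun ⟨l, -e⟩) :=
    hfc.adjoint_resolvent hT he
  rw [hfc.bcfMap_lorentzianBCF hT he, ← hadj, smul_apply, inner_smul_right,
    ContinuousLinearMap.comp_apply, ContinuousLinearMap.adjoint_inner_right,
    inner_self_eq_norm_sq_to_K]
  push_cast; rfl

lemma continuous_resolvent_line (hfc : IsBorelFunctionalCalculus T fc) (hT : IsSelfAdjoint T)
    (he : e ≠ 0) : Continuous fun l => fc (resolventFun ⟨l, e⟩) := by
  have hline : Continuous fun l : ℝ => (⟨l, e⟩ : ℂ) := by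
    simp_rw [Complex.mk_eq_add_mul_I]; fun_prop
  exact continuous_iff_continuousAt.2 fun l =>
    ContinuousAt.comp (f := fun l : ℝ => (⟨l, e⟩ : ℂ)) (hfc.continuousAt_resolvent hT he)
      hline.continuousAt

lemma abs_mul_integral_norm_resolvent_sq_le (hfc : IsBorelFunctionalCalculus T fc)
    (hT : IsSelfAdjoint T) (he : e ≠ 0) {a b : ℝ} (hab : a ≤ b) (u : L2 n) :
    |e| * ∫ l in a..b, ‖fc (resolventFun ⟨l, e⟩) u‖ ^ 2 ≤ π * ‖u‖ ^ 2 := by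
  let quad : BoundedContinuousFunction ℝ ℂ →L[ℂ] ℂ :=
    (innerSL ℂ u).comp ((ContinuousLinearMap.apply ℂ (L2 n) u).comp (hfc.bcfMap hT))
  have hquad : ∀ f, quad f = inner ℂ u (hfc.bcfMap hT f u) := fun _ => rfl
  have hint := quad.intervalIntegral_comp_comm
    ((continuous_lorentzianBCF e).intervalIntegrable (μ := volume) a b)
  simp only [hquad, hfc.inner_bcfMap_lorentzianBCF hT he, intervalIntegral.integral_ofReal,
    intervalIntegral.integral_const_mul] at hint
  set f := ∫ l in a..b, lorentzianBCF e l
  have hf_norm : ‖f‖ ≤ π := by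
    simpa [f] using norm_integral_smul_lorentzianBCF_le (f := fun _ => 1) continuous_const
      (M := 1) (by simp) he hab
  have hf : ‖hfc.bcfMap hT f‖ ≤ π := hfc.norm_le _ _ f.continuous.measurable fun x =>
    (f.norm_coe_le_norm x).trans hf_norm
  have hpos : 0 ≤ ∫ l in a..b, ‖fc (resolventFun ⟨l, e⟩) u‖ ^ 2 :=
    intervalIntegral.integral_nonneg hab fun _ _ => sq_nonneg _
  calc |e| * ∫ l in a..b, ‖fc (resolventFun ⟨l, e⟩) u‖ ^ 2
      = ‖inner ℂ u (hfc.bcfMap hT f u)‖ := by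
        rw [← hint, Complex.norm_real, Real.norm_eq_abs, abs_mul, abs_of_nonneg hpos]
    _ ≤ ‖u‖ * (π * ‖u‖) := (norm_inner_le_norm _ _).trans
        (mul_le_mul_of_nonneg_left ((hfc.bcfMap hT f).le_of_opNorm_le hf u) (norm_nonneg u))
    _ = π * ‖u‖ ^ 2 := by ring

end IsBorelFunctionalCalculus

section Stone

/-- The rescaling `l = x + e y` of a Poisson integral. -/
lemma integral_mul_lorentzian_eq {e : ℝ} (he : 0 < e) (f : ℝ → ℂ) (x : ℝ) :
    ∫ l, f l * (lorentzian e l x : ℂ) = ∫ y, f (x + e * y) * (((1 + y ^ 2)⁻¹ : ℝ) : ℂ) := by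
  have hkernel : ∀ y, f (x + e * y) * (lorentzian e (x + e * y) x : ℂ) =
      (e⁻¹ : ℂ) * (f (x + e * y) * (((1 + y ^ 2)⁻¹ : ℝ) : ℂ)) := by
    intro y
    have hval : lorentzian e (x + e * y) x = e⁻¹ * (1 + y ^ 2)⁻¹ := by
      rw [lorentzian, show (x - (x + e * y)) ^ 2 + e ^ 2 = e ^ 2 * (1 + y ^ 2) by ring]
      field_simp
    rw [hval]; push_cast; ring
  have hscale :=
    Measure.integral_comp_mul_left (fun l => f (x + l) * (lorentzian e (x + l) x : ℂ)) e
  simp only [hkernel] at hscale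
  rw [integral_const_mul, abs_of_pos (inv_pos.2 he), Complex.real_smul, Complex.ofReal_inv]
    at hscale
  rw [← integral_add_left_eq_self (fun l => f l * (lorentzian e l x : ℂ)) x]
  exact (mul_left_cancel₀ (inv_ne_zero (Complex.ofReal_ne_zero.2 he.ne')) hscale).symm

lemma tendsto_integral_mul_lorentzian {f : ℝ → ℂ} (hf : Continuous f) {M : ℝ}
    (hM : ∀ x, ‖f x‖ ≤ M) {e : ℕ → ℝ} (he : ∀ k, 0 < e k) (he0 : Tendsto e atTop (𝓝 0)) (x : ℝ) :
    Tendsto (fun k => (π⁻¹ : ℂ) * ∫ l, f l * (lorentzian (e k) l x : ℂ)) atTop (𝓝 (f x)) := by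
  simp only [integral_mul_lorentzian_eq (he _)]
  have hlim : Tendsto (fun k => ∫ y, f (x + e k * y) * (((1 + y ^ 2)⁻¹ : ℝ) : ℂ)) atTop
      (𝓝 (∫ y : ℝ, f x * (((1 + y ^ 2)⁻¹ : ℝ) : ℂ))) := by
    refine tendsto_integral_of_dominated_convergence (fun y => M * (1 + y ^ 2)⁻¹) (fun k => ?_)
      (integrable_inv_one_add_sq.const_mul M) (fun k => Eventually.of_forall fun y => ?_)
      (Eventually.of_forall fun y => Tendsto.mul_const _ ?_)
    · refine Continuous.aestronglyMeasurable ((hf.comp (by fun_prop)).mul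
        (Complex.continuous_ofReal.comp ?_))
      exact Continuous.inv₀ (by fun_prop) fun y => by positivity
    · have hpos : 0 < (1 + y ^ 2)⁻¹ := by positivity
      rw [norm_mul, Complex.norm_real, Real.norm_eq_abs, abs_of_pos hpos]
      gcongr
      exact hM _
    · have harg : Tendsto (fun k => x + e k * y) atTop (𝓝 x) := by
        simpa using (he0.mul_const y).const_add x
      exact (hf.tendsto x).comp harg
  have hpi : (π : ℂ) ≠ 0 := Complex.ofReal_ne_zero.2 pi_ne_zero
  have hconst := hlim.const_mul (π⁻¹ : ℂ)
  rwa [integral_const_mul, integral_complex_ofReal, integral_univ_inv_one_add_sq,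
    show (π⁻¹ : ℂ) * (f x * (π : ℂ)) = f x by field_simp] at hconst

/-- Stone's formula, smeared against a continuous function. -/
lemma IsBorelFunctionalCalculus.tendsto_bcfMap_integral {n : ℕ} {T : L2 n →ₗ.[ℂ] L2 n}
    {fc : (ℝ → ℂ) → (L2 n →L[ℂ] L2 n)} (hfc : IsBorelFunctionalCalculus T fc)
    (hT : IsSelfAdjoint T) {f : ℝ → ℂ} (hf : Continuous f) {M : ℝ} (hM : ∀ x, ‖f x‖ ≤ M)
    {a b : ℝ} (hab : a ≤ b) (hsupp : Function.support f ⊆ Ioc a b) {e : ℕ → ℝ}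
    (he : ∀ k, 0 < e k) (he0 : Tendsto e atTop (𝓝 0)) (u : L2 n) :
    Tendsto (fun k => (π⁻¹ : ℂ) • hfc.bcfMap hT (∫ l in a..b, f l • lorentzianBCF (e k) l) u) atTop
      (𝓝 (fc f u)) := by
  let F : ℕ → BoundedContinuousFunction ℝ ℂ :=
    fun k => (π⁻¹ : ℂ) • ∫ l in a..b, f l • lorentzianBCF (e k) l
  have hF : ∀ k, ‖F k‖ ≤ M := fun k => by
    calc ‖F k‖ = π⁻¹ * ‖∫ l in a..b, f l • lorentzianBCF (e k) l‖ := by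
          rw [norm_smul, norm_inv, Complex.norm_real, Real.norm_eq_abs, abs_of_pos pi_pos]
      _ ≤ π⁻¹ * (M * π) := by
          gcongr
          exact norm_integral_smul_lorentzianBCF_le hf hM (he k).ne' hab
      _ = M := by field_simp
  have hlim : ∀ x, Tendsto (fun k => F k x) atTop (𝓝 (f x)) := fun x => by
    refine (tendsto_integral_mul_lorentzian hf hM he he0 x).congr fun k => ?_
    rw [BoundedContinuousFunction.smul_apply, integral_smul_lorentzianBCF_apply hf, smul_eq_mul,
      intervalIntegral.integral_eq_integral_of_support_subset
        ((Function.support_mul_subset_left _ _).trans hsupp)]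
  refine (hfc.tendsto_of_ptwise (fun k => F k) f M (fun k => (F k).continuous.measurable)
    hf.measurable (fun k x => ((F k).norm_coe_le_norm x).trans (hF k)) hlim u).congr fun k => ?_
  exact DFunLike.congr_fun ((hfc.bcfMap hT).map_smul (π⁻¹ : ℂ) _) u

end Stone

/-! ### Kato smoothing -/

lemma norm_indicator_one_le (S : Set ℝ) (x : ℝ) : ‖(S.indicator 1 x : ℂ)‖ ≤ 1 := by
  by_cases hx : x ∈ S <;> simp [hx]

namespace IsBorelFunctionalCalculus

variable {n : ℕ} {T : L2 n →ₗ.[ℂ] L2 n} {fc : (ℝ → ℂ) → (L2 n →L[ℂ] L2 n)} {S : Set ℝ} {z : ℂ}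

lemma norm_cutoff_le (hfc : IsBorelFunctionalCalculus T fc) (hS : MeasurableSet S) :
    ‖fc (S.indicator 1)‖ ≤ 1 :=
  hfc.norm_le _ 1 (measurable_one.indicator hS) (norm_indicator_one_le S)

lemma cutoff_add_cutoff_compl (hfc : IsBorelFunctionalCalculus T fc) (hS : MeasurableSet S) :
    fc (S.indicator 1) + fc (Sᶜ.indicator 1) = ContinuousLinearMap.id ℂ (L2 n) := by
  rw [← hfc.map_add _ _ (measurable_one.indicator hS) (measurable_one.indicator hS.compl)
    ⟨1, norm_indicator_one_le S⟩ ⟨1, norm_indicator_one_le Sᶜ⟩, ← hfc.map_one]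
  congr 1 with x
  by_cases hx : x ∈ S <;> simp [hx]

lemma resolvent_comp_cutoff (hfc : IsBorelFunctionalCalculus T fc) (hS : MeasurableSet S)
    (hz : z.im ≠ 0) :
    fc (fun x => resolventFun z x * S.indicator 1 x) =
      fc (resolventFun z) ∘L fc (S.indicator 1) :=
  hfc.map_mul _ _ (measurable_resolventFun z) (measurable_one.indicator hS)
    (resolventFun_bounded hz) ⟨1, norm_indicator_one_le S⟩

lemma resolvent_comp_cutoff_comm (hfc : IsBorelFunctionalCalculus T fc) (hS : MeasurableSet S)
    (hz : z.im ≠ 0) :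
    fc (resolventFun z) ∘L fc (S.indicator 1) = fc (S.indicator 1) ∘L fc (resolventFun z) := by
  rw [← hfc.resolvent_comp_cutoff hS hz, ← hfc.map_mul _ _ (measurable_one.indicator hS)
    (measurable_resolventFun z) ⟨1, norm_indicator_one_le S⟩ (resolventFun_bounded hz)]
  simp_rw [mul_comm]

lemma norm_resolvent_comp_cutoff_le (hfc : IsBorelFunctionalCalculus T fc)
    (hS : MeasurableSet S) (hz : z.im ≠ 0) {d : ℝ} (hd : 0 < d)
    (hdist : ∀ x ∈ S, d ≤ ‖(x : ℂ) - z‖) :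
    ‖fc (resolventFun z) ∘L fc (S.indicator 1)‖ ≤ d⁻¹ := by
  rw [← hfc.resolvent_comp_cutoff hS hz]
  refine hfc.norm_le _ _ ((measurable_resolventFun z).mul (measurable_one.indicator hS))
    fun x => ?_
  by_cases hx : x ∈ S
  · simpa [hx, resolventFun] using inv_anti₀ hd (hdist x hx)
  · simpa [hx] using hd.le

end IsBorelFunctionalCalculus

section TTStar

variable {H F : Type*} [NormedAddCommGroup H] [InnerProductSpace ℂ H] [CompleteSpace H]
  [NormedAddCommGroup F] [InnerProductSpace ℂ F] [CompleteSpace F]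

lemma adjoint_sandwich (A : H →L[ℂ] F) (R : H →L[ℂ] H) :
    (A ∘L R ∘L A.adjoint).adjoint = A ∘L R.adjoint ∘L A.adjoint := by
  rw [ContinuousLinearMap.adjoint_comp, ContinuousLinearMap.adjoint_comp,
    ContinuousLinearMap.adjoint_adjoint, ContinuousLinearMap.comp_assoc]

/-- The `T T*` argument: `‖A R‖² = ‖A R R* A*‖`. -/
lemma norm_mul_norm_comp_sq_le {A : H →L[ℂ] F} {R : H →L[ℂ] H} {w : ℂ}
    (hR : R - R.adjoint = w • R ∘L R.adjoint) {c : ℝ} (hA : ‖A ∘L R ∘L A.adjoint‖ ≤ c) :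
    ‖w‖ * ‖A ∘L R‖ ^ 2 ≤ 2 * c := by
  have hprod : w • (A ∘L R) ∘L (A ∘L R).adjoint =
      A ∘L R ∘L A.adjoint - A ∘L R.adjoint ∘L A.adjoint := by
    rw [← ContinuousLinearMap.comp_sub, ← ContinuousLinearMap.sub_comp, hR,
      ContinuousLinearMap.adjoint_comp, ContinuousLinearMap.smul_comp,
      ContinuousLinearMap.comp_smul]
    rfl
  have hnorm : ‖(A ∘L R) ∘L (A ∘L R).adjoint‖ = ‖A ∘L R‖ * ‖A ∘L R‖ := by
    have hself := ContinuousLinearMap.norm_adjoint_comp_self (A ∘L R).adjoint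
    rwa [ContinuousLinearMap.adjoint_adjoint, LinearIsometryEquiv.norm_map] at hself
  calc ‖w‖ * ‖A ∘L R‖ ^ 2 = ‖w • (A ∘L R) ∘L (A ∘L R).adjoint‖ := by
        rw [norm_smul, hnorm, sq]
    _ ≤ ‖A ∘L R ∘L A.adjoint‖ + ‖A ∘L R.adjoint ∘L A.adjoint‖ := by
        rw [hprod]; exact norm_sub_le _ _
    _ ≤ 2 * c := by
        rw [← adjoint_sandwich, LinearIsometryEquiv.norm_map, two_mul]
        exact add_le_add hA hA

end TTStar

lemma IsBorelFunctionalCalculus.abs_im_mul_norm_comp_resolvent_sq_le {n : ℕ}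
    {T : L2 n →ₗ.[ℂ] L2 n} {fc : (ℝ → ℂ) → (L2 n →L[ℂ] L2 n)}
    {F : Type*} [NormedAddCommGroup F] [InnerProductSpace ℂ F] [CompleteSpace F]
    (hfc : IsBorelFunctionalCalculus T fc) (hT : IsSelfAdjoint T) {A : L2 n →L[ℂ] F} {z : ℂ}
    (hz : z.im ≠ 0) {c : ℝ} (hA : ‖A ∘L fc (resolventFun z) ∘L A.adjoint‖ ≤ c) :
    |z.im| * ‖A ∘L fc (resolventFun z)‖ ^ 2 ≤ c := by
  have hadj := hfc.adjoint_resolvent hT hz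
  have hR := hfc.resolvent_sub_resolvent hT hz (w := conj z) (by simpa using hz)
  rw [← hadj] at hR
  have hnorm : ‖z - conj z‖ = 2 * |z.im| := by rw [Complex.sub_conj]; simp
  have hTT := norm_mul_norm_comp_sq_le hR hA
  rw [hnorm] at hTT
  linarith

/-- Contour shift in the half-plane `e ≤ Im z`, across the rectangle `[-N, N] × [e, N]`. -/
lemma norm_integral_horizontal_le {f : ℂ → ℂ} {e N C : ℝ} (heN : e ≤ N) (hN : 0 ≤ N) (he : 0 ≤ e)
    (hf : ∀ z : ℂ, e ≤ z.im → DifferentiableAt ℂ f z)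
    (hC : ∀ z : ℂ, e ≤ z.im → N ≤ max |z.re| z.im → ‖f z‖ ≤ C) :
    ‖∫ l in (-N)..N, f ⟨l, e⟩‖ ≤ 4 * N * C := by
  have hrect := Complex.integral_boundary_rect_eq_zero_of_differentiableOn f ⟨-N, e⟩ ⟨N, N⟩
    fun z hz => (hf z (by
      have him : z.im ∈ uIcc e N := hz.2
      rw [uIcc_of_le heN] at him
      exact him.1)).differentiableWithinAt
  simp only [← Complex.mk_eq_add_mul_I] at hrect
  have htop : ‖∫ l in (-N)..N, f ⟨l, N⟩‖ ≤ 2 * N * C := by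
    refine (intervalIntegral.norm_integral_le_of_norm_le_const (C := C) fun l _ =>
      hC _ heN (le_max_right _ _)).trans_eq ?_
    rw [abs_of_nonneg (by linarith)]; ring
  have hside : ∀ s : ℝ, |s| = N → ‖∫ y in e..N, f ⟨s, y⟩‖ ≤ N * C := by
    intro s hs
    have hC0 : 0 ≤ C := (norm_nonneg _).trans (hC ⟨s, N⟩ heN (le_max_right _ _))
    refine (intervalIntegral.norm_integral_le_of_norm_le_const (C := C) fun y hy => ?_).trans ?_
    · rw [uIoc_of_le heN] at hy
      exact hC _ hy.1.le (hs.ge.trans (le_max_left _ _))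
    · rw [abs_of_nonneg (by linarith), mul_comm]
      gcongr
      linarith
  have hshift : ∫ l in (-N)..N, f ⟨l, e⟩ = (∫ l in (-N)..N, f ⟨l, N⟩) -
      Complex.I • (∫ y in e..N, f ⟨N, y⟩) + Complex.I • ∫ y in e..N, f ⟨-N, y⟩ := by
    linear_combination hrect
  have hright := hside N (abs_of_nonneg hN)
  have hleft := hside (-N) (by rw [abs_neg, abs_of_nonneg hN])
  calc ‖∫ l in (-N)..N, f ⟨l, e⟩‖ ≤ ‖∫ l in (-N)..N, f ⟨l, N⟩‖ + ‖∫ y in e..N, f ⟨N, y⟩‖ +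
        ‖∫ y in e..N, f ⟨-N, y⟩‖ := by
        rw [hshift]
        refine (norm_add_le _ _).trans
          (add_le_add ((norm_sub_le _ _).trans_eq ?_) (le_of_eq ?_)) <;> simp
    _ ≤ 4 * N * C := by linarith

namespace IsBorelFunctionalCalculus

variable {n : ℕ} {T : L2 n →ₗ.[ℂ] L2 n} {fc : (ℝ → ℂ) → (L2 n →L[ℂ] L2 n)}
  {F : Type*} [NormedAddCommGroup F] [InnerProductSpace ℂ F] {S : Set ℝ} {e : ℝ}

lemma continuous_comp_resolvent_line_apply (hfc : IsBorelFunctionalCalculus T fc)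
    (hT : IsSelfAdjoint T) (A : L2 n →L[ℂ] F) (he : e ≠ 0) (u : L2 n) :
    Continuous fun l => A (fc (resolventFun ⟨l, e⟩) u) :=
  A.continuous.comp ((hfc.continuous_resolvent_line hT he).clm_apply continuous_const)

lemma norm_inner_comp_resolvent_cutoff_le (hfc : IsBorelFunctionalCalculus T fc)
    (A : L2 n →L[ℂ] F) (hS : MeasurableSet S) {z : ℂ} (hz : z.im ≠ 0) {d : ℝ} (hd : 0 < d)
    (hdist : ∀ x ∈ S, d ≤ ‖(x : ℂ) - z‖) (u : L2 n) :
    ‖inner ℂ (A (fc (resolventFun (conj z)) (fc (S.indicator 1) u)))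
      (A (fc (resolventFun z) (fc (S.indicator 1) u)))‖ ≤ (‖A‖ * (d⁻¹ * ‖u‖)) ^ 2 := by
  have hbound : ∀ w : ℂ, w.im ≠ 0 → (∀ x ∈ S, d ≤ ‖(x : ℂ) - w‖) →
      ‖A (fc (resolventFun w) (fc (S.indicator 1) u))‖ ≤ ‖A‖ * (d⁻¹ * ‖u‖) := fun w hw hdw =>
    A.le_opNorm_of_le (ContinuousLinearMap.le_of_opNorm_le (fc (resolventFun w) ∘L _)
      (hfc.norm_resolvent_comp_cutoff_le hS hw hd hdw) u)
  rw [sq]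
  refine (norm_inner_le_norm _ _).trans (mul_le_mul (hbound _ (by simpa using hz) fun x hx => ?_)
    (hbound z hz hdist) (norm_nonneg _) (by positivity))
  rw [← Complex.conj_ofReal, ← map_sub, Complex.norm_conj]
  exact hdist x hx

section Mixed

variable [CompleteSpace F]

/-- `⟨A R(z̄) v, A R(z) v⟩` written so that its holomorphy in `z` is visible. -/
lemma inner_comp_resolvent_conj (hfc : IsBorelFunctionalCalculus T fc) (hT : IsSelfAdjoint T)
    (A : L2 n →L[ℂ] F) {z : ℂ} (hz : z.im ≠ 0) (v : L2 n) :
    inner ℂ (A (fc (resolventFun (conj z)) v)) (A (fc (resolventFun z) v)) =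
      inner ℂ v (fc (resolventFun z) (A.adjoint (A (fc (resolventFun z) v)))) := by
  rw [← hfc.adjoint_resolvent hT hz, ← ContinuousLinearMap.adjoint_inner_right,
    ContinuousLinearMap.adjoint_inner_left]

lemma differentiableAt_inner_comp_resolvent (hfc : IsBorelFunctionalCalculus T fc)
    (hT : IsSelfAdjoint T) (A : L2 n →L[ℂ] F) {z : ℂ} (hz : z.im ≠ 0) (v : L2 n) :
    DifferentiableAt ℂ (fun z => inner ℂ v
      (fc (resolventFun z) (A.adjoint (A (fc (resolventFun z) v))))) z := by
  have hR := hfc.differentiableAt_resolvent hT hz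
  exact (innerSL ℂ v).differentiableAt.comp z (hR.clm_apply
    ((A.adjoint ∘L A).differentiableAt.comp z (hR.clm_apply (differentiableAt_const v))))

/-- The mixed term is the boundary value of a function holomorphic in the upper half-plane and
decaying like `|z|⁻²`. -/
lemma tendsto_integral_mixed (hfc : IsBorelFunctionalCalculus T fc) (hT : IsSelfAdjoint T)
    (A : L2 n →L[ℂ] F) (hS : MeasurableSet S) (hSb : Bornology.IsBounded S) (he : 0 < e)
    (u : L2 n) :
    Tendsto (fun N : ℝ => ∫ l in (-N)..N,
      inner ℂ (A (fc (resolventFun ⟨l, -e⟩) (fc (S.indicator 1) u)))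
        (A (fc (resolventFun ⟨l, e⟩) (fc (S.indicator 1) u)))) atTop (𝓝 0) := by
  obtain ⟨M, hM⟩ := hSb.exists_norm_le
  have hlim := (tendsto_inv_atTop_zero (𝕜 := ℝ)).const_mul (16 * (‖A‖ * ‖u‖) ^ 2)
  rw [mul_zero] at hlim
  refine squeeze_zero_norm' ?_ hlim
  filter_upwards [eventually_ge_atTop (2 * M), eventually_ge_atTop e] with N hNM hNe
  have hN : 0 < N := he.trans_le hNe
  have hshift := norm_integral_horizontal_le (C := (‖A‖ * ((N / 2)⁻¹ * ‖u‖)) ^ 2) hNe hN.le he.le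
    (fun z hz => hfc.differentiableAt_inner_comp_resolvent hT A (he.trans_le hz).ne'
      (fc (S.indicator 1) u)) fun z hz hzN => by
    have hz0 : z.im ≠ 0 := (he.trans_le hz).ne'
    rw [← hfc.inner_comp_resolvent_conj hT A hz0]
    refine hfc.norm_inner_comp_resolvent_cutoff_le A hS hz0 (half_pos hN) (fun x hx => ?_) u
    rcases le_max_iff.1 hzN with hre | him
    · have hdist := abs_sub_re_le_norm_ofReal_sub z x
      have htri := abs_sub_abs_le_abs_sub z.re x
      have hxM : |x| ≤ M := hM x hx
      rw [abs_sub_comm] at hdist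
      linarith
    · linarith [abs_im_le_norm_ofReal_sub z x, le_abs_self z.im]
  simp_rw [← hfc.inner_comp_resolvent_conj hT A (z := ⟨_, e⟩) he.ne'] at hshift
  refine hshift.trans_eq ?_
  field_simp
  ring

end Mixed

lemma comp_resolvent_sub_resolvent_cutoff (hfc : IsBorelFunctionalCalculus T fc)
    (hT : IsSelfAdjoint T) (A : L2 n →L[ℂ] F) (hS : MeasurableSet S) (he : e ≠ 0) (l : ℝ)
    (u : L2 n) :
    A (fc (resolventFun ⟨l, e⟩) (fc (S.indicator 1) u)) -
        A (fc (resolventFun ⟨l, -e⟩) (fc (S.indicator 1) u)) =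
      (2 * e * Complex.I) • A (fc (resolventFun ⟨l, e⟩)
        (fc (S.indicator 1) (fc (resolventFun ⟨l, -e⟩) u))) := by
  have hm : (⟨l, -e⟩ : ℂ).im ≠ 0 := neg_ne_zero.2 he
  have hcomm := DFunLike.congr_fun (hfc.resolvent_comp_cutoff_comm hS hm) u
  have hres := DFunLike.congr_fun (hfc.resolvent_sub_resolvent hT (z := ⟨l, e⟩) he hm)
    (fc (S.indicator 1) u)
  have hdiff : (⟨l, e⟩ : ℂ) - ⟨l, -e⟩ = 2 * e * Complex.I := by
    apply Complex.ext <;> simp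
    ring
  rw [hdiff] at hres
  rw [← map_sub, ← map_smul]
  exact congrArg A (hres.trans (by
    rw [smul_apply, ContinuousLinearMap.comp_apply]
    exact congrArg (fun w => (2 * e * Complex.I : ℂ) • fc (resolventFun ⟨l, e⟩) w) hcomm))

lemma integral_norm_comp_resolvent_jump_sq_le (hfc : IsBorelFunctionalCalculus T fc)
    (hT : IsSelfAdjoint T) {A : L2 n →L[ℂ] F} (hS : MeasurableSet S) (he : 0 < e) {K : ℝ}
    (hK : ∀ l, e * ‖A ∘L fc (resolventFun ⟨l, e⟩) ∘L fc (S.indicator 1)‖ ^ 2 ≤ K) {a b : ℝ}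
    (hab : a ≤ b) (u : L2 n) :
    ∫ l in a..b, ‖A (fc (resolventFun ⟨l, e⟩) (fc (S.indicator 1) u)) -
        A (fc (resolventFun ⟨l, -e⟩) (fc (S.indicator 1) u))‖ ^ 2 ≤ 4 * π * K * ‖u‖ ^ 2 := by
  have hm : -e ≠ 0 := neg_ne_zero.2 he.ne'
  have hK0 : 0 ≤ K := (by positivity : (0 : ℝ) ≤ _).trans (hK 0)
  have hRu : Continuous fun l => fc (resolventFun ⟨l, -e⟩) u :=
    (hfc.continuous_resolvent_line hT hm).clm_apply continuous_const
  have hmass := hfc.abs_mul_integral_norm_resolvent_sq_le hT hm hab u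
  rw [abs_neg, abs_of_pos he] at hmass
  calc ∫ l in a..b, ‖A (fc (resolventFun ⟨l, e⟩) (fc (S.indicator 1) u)) -
        A (fc (resolventFun ⟨l, -e⟩) (fc (S.indicator 1) u))‖ ^ 2
      ≤ ∫ l in a..b, 4 * K * (e * ‖fc (resolventFun ⟨l, -e⟩) u‖ ^ 2) := by
        refine intervalIntegral.integral_mono_on hab
          (Continuous.intervalIntegrable (((hfc.continuous_comp_resolvent_line_apply hT A he.ne'
            _).sub (hfc.continuous_comp_resolvent_line_apply hT A hm _)).norm.pow 2) _ _)
          ((continuous_const.mul (continuous_const.mul (hRu.norm.pow 2))).intervalIntegrable _ _)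
          fun l _ => ?_
        rw [hfc.comp_resolvent_sub_resolvent_cutoff hT A hS he.ne' l u, norm_smul, mul_pow]
        set v := fc (resolventFun ⟨l, -e⟩) u
        have happly : ‖A (fc (resolventFun ⟨l, e⟩) (fc (S.indicator 1) v))‖ ≤
            ‖A ∘L fc (resolventFun ⟨l, e⟩) ∘L fc (S.indicator 1)‖ * ‖v‖ :=
          (A ∘L fc (resolventFun ⟨l, e⟩) ∘L fc (S.indicator 1)).le_opNorm v
        have hcoef : ‖2 * e * Complex.I‖ = 2 * e := by simp [abs_of_pos he]
        calc ‖2 * e * Complex.I‖ ^ 2 * ‖A (fc (resolventFun ⟨l, e⟩) (fc (S.indicator 1) v))‖ ^ 2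
            ≤ (2 * e) ^ 2 *
              (‖A ∘L fc (resolventFun ⟨l, e⟩) ∘L fc (S.indicator 1)‖ * ‖v‖) ^ 2 := by
              rw [hcoef]; gcongr
          _ = 4 * (e * ‖A ∘L fc (resolventFun ⟨l, e⟩) ∘L fc (S.indicator 1)‖ ^ 2) *
              (e * ‖v‖ ^ 2) := by ring
          _ ≤ 4 * K * (e * ‖v‖ ^ 2) := by gcongr; exact hK l
    _ = 4 * K * (e * ∫ l in a..b, ‖fc (resolventFun ⟨l, -e⟩) u‖ ^ 2) := by
        rw [intervalIntegral.integral_const_mul, intervalIntegral.integral_const_mul]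
    _ ≤ 4 * K * (π * ‖u‖ ^ 2) := by gcongr
    _ = 4 * π * K * ‖u‖ ^ 2 := by ring

end IsBorelFunctionalCalculus

lemma integral_norm_sq_add_norm_sq_le {F : Type*} [NormedAddCommGroup F]
    [InnerProductSpace ℂ F] [CompleteSpace F] {P Q : ℝ → F} (hP : Continuous P)
    (hQ : Continuous Q) {J : ℝ}
    (hJ : ∀ N, 0 ≤ N → ∫ l in (-N)..N, ‖P l - Q l‖ ^ 2 ≤ J)
    (hmix : Tendsto (fun N : ℝ => ∫ l in (-N)..N, inner ℂ (Q l) (P l)) atTop (𝓝 0)) {a b : ℝ}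
    (hab : a ≤ b) : ∫ l in a..b, (‖P l‖ ^ 2 + ‖Q l‖ ^ 2) ≤ J := by
  have hre : Continuous fun l => 2 * RCLike.re (inner ℂ (Q l) (P l)) :=
    continuous_const.mul (RCLike.continuous_re.comp (hQ.inner hP))
  have hpolar : ∀ l, ‖P l‖ ^ 2 + ‖Q l‖ ^ 2 =
      ‖P l - Q l‖ ^ 2 + 2 * RCLike.re (inner ℂ (Q l) (P l)) := fun l => by
    rw [norm_sub_rev, norm_sub_sq (𝕜 := ℂ)]
    ring
  have hcross : ∀ N, ∫ l in (-N)..N, 2 * RCLike.re (inner ℂ (Q l) (P l)) =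
      2 * RCLike.re (∫ l in (-N)..N, inner ℂ (Q l) (P l)) := fun N => by
    rw [intervalIntegral.integral_const_mul]
    exact congrArg (2 * ·) ((RCLike.reCLM (K := ℂ)).intervalIntegral_comp_comm
      ((hQ.inner hP).intervalIntegrable (-N) N))
  have hlim : Tendsto (fun N : ℝ => J + 2 * RCLike.re (∫ l in (-N)..N, inner ℂ (Q l) (P l)))
      atTop (𝓝 (J + 2 * RCLike.re (0 : ℂ))) :=
    (((RCLike.continuous_re.tendsto 0).comp hmix).const_mul 2).const_add J
  rw [map_zero, mul_zero, add_zero] at hlim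
  refine ge_of_tendsto hlim ?_
  filter_upwards [eventually_ge_atTop (max |a| |b|)] with N hN
  obtain ⟨haN, hbN⟩ := max_le_iff.1 hN
  calc ∫ l in a..b, (‖P l‖ ^ 2 + ‖Q l‖ ^ 2)
      ≤ ∫ l in (-N)..N, (‖P l‖ ^ 2 + ‖Q l‖ ^ 2) :=
        intervalIntegral.integral_mono_interval (neg_le_of_abs_le haN) hab
          ((le_abs_self b).trans hbN) (Eventually.of_forall fun l => by positivity)
          (Continuous.intervalIntegrable (by fun_prop) _ _)
    _ = (∫ l in (-N)..N, ‖P l - Q l‖ ^ 2) +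
          2 * RCLike.re (∫ l in (-N)..N, inner ℂ (Q l) (P l)) := by
        rw [← hcross, ← intervalIntegral.integral_add
          (Continuous.intervalIntegrable (by fun_prop) _ _) (hre.intervalIntegrable _ _)]
        simp_rw [hpolar]
    _ ≤ J + 2 * RCLike.re (∫ l in (-N)..N, inner ℂ (Q l) (P l)) := by
        gcongr
        exact hJ N ((abs_nonneg a).trans haN)

lemma IsBorelFunctionalCalculus.intervalIntegrable_add_norm_comp_resolvent_sq {n : ℕ}
    {T : L2 n →ₗ.[ℂ] L2 n} {fc : (ℝ → ℂ) → (L2 n →L[ℂ] L2 n)}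
    (hfc : IsBorelFunctionalCalculus T fc) (hT : IsSelfAdjoint T) {F : Type*}
    [NormedAddCommGroup F] [InnerProductSpace ℂ F] (A : L2 n →L[ℂ] F) {s : ℝ} (hs : s ≠ 0)
    (a b : ℝ) (u v : L2 n) :
    IntervalIntegrable (fun l => ‖A (fc (resolventFun ⟨l, -s⟩) u)‖ ^ 2 +
      ‖A (fc (resolventFun ⟨l, s⟩) v)‖ ^ 2) volume a b :=
  (((hfc.continuous_comp_resolvent_line_apply hT A (neg_ne_zero.2 hs) u).norm.pow 2).add
    ((hfc.continuous_comp_resolvent_line_apply hT A hs v).norm.pow 2)).intervalIntegrable a b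

/-- The limiting absorption principle at high energy for the weight `A`: the sandwiched resolvent
`A R(z) A*` is bounded by `Λ (Re z)^{-1/2}`, uniformly up to the real axis. -/
def LimitingAbsorption {n : ℕ} {F : Type*} [NormedAddCommGroup F] [InnerProductSpace ℂ F]
    [CompleteSpace F] (fc : (ℝ → ℂ) → (L2 n →L[ℂ] L2 n)) (A : L2 n →L[ℂ] F) (Λ : ℝ) : Prop :=
  ∀ z : ℂ, 1 ≤ z.re → z.im ≠ 0 → |z.im| ≤ 1 →
    ‖A ∘L fc (resolventFun z) ∘L A.adjoint‖ ≤ Λ / √z.re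

/-- The constant in Kato's smoothing estimate on energy windows `[a, b]` with `b ≤ κ a`, for a
weight of norm `ν` satisfying limiting absorption with constant `Λ`. -/
def katoConst (ν Λ κ : ℝ) : ℝ := 8 * π * (2 * Λ + 16 * ν ^ 2) + 8 * κ * ν ^ 2

lemma katoConst_nonneg {ν Λ κ : ℝ} (hΛ : 0 ≤ Λ) (hκ : 0 ≤ κ) : 0 ≤ katoConst ν Λ κ := by
  unfold katoConst
  positivity

lemma IsBorelFunctionalCalculus.norm_comp_resolvent_sq_le_add_cutoff {n : ℕ}
    {T : L2 n →ₗ.[ℂ] L2 n} {fc : (ℝ → ℂ) → (L2 n →L[ℂ] L2 n)}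
    (hfc : IsBorelFunctionalCalculus T fc) {F : Type*} [NormedAddCommGroup F] [NormedSpace ℂ F]
    (A : L2 n →L[ℂ] F) {a b s l : ℝ} (ha : 0 < a) (hs : s ≠ 0) (hl : l ∈ Icc a b) (u : L2 n) :
    ‖A (fc (resolventFun ⟨l, s⟩) u)‖ ^ 2 ≤
      2 * ‖A (fc (resolventFun ⟨l, s⟩) (fc ((Icc (a / 2) (2 * b)).indicator 1) u))‖ ^ 2 +
        8 * ‖A‖ ^ 2 / a ^ 2 * ‖u‖ ^ 2 := by
  set S := Icc (a / 2) (2 * b)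
  have hS : MeasurableSet S := measurableSet_Icc
  have hfar := hfc.norm_resolvent_comp_cutoff_le (z := ⟨l, s⟩) (d := a / 2) hS.compl hs
    (by positivity) fun x hx => by
      refine le_trans ?_ (abs_sub_re_le_norm_ofReal_sub ⟨l, s⟩ x)
      rw [le_abs]
      by_contra! hc
      simp only at hc
      exact hx ⟨by linarith [hl.1], by linarith [hl.1, hl.2]⟩
  have hfarA : ‖A (fc (resolventFun ⟨l, s⟩) (fc (Sᶜ.indicator 1) u))‖ ≤
      ‖A‖ * ((a / 2)⁻¹ * ‖u‖) :=
    A.le_opNorm_of_le (ContinuousLinearMap.le_of_opNorm_le (fc _ ∘L fc _) hfar u)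
  have hsplit : fc (S.indicator 1) u + fc (Sᶜ.indicator 1) u = u :=
    DFunLike.congr_fun (hfc.cutoff_add_cutoff_compl hS) u
  calc ‖A (fc (resolventFun ⟨l, s⟩) u)‖ ^ 2
      = ‖A (fc (resolventFun ⟨l, s⟩) (fc (S.indicator 1) u)) +
          A (fc (resolventFun ⟨l, s⟩) (fc (Sᶜ.indicator 1) u))‖ ^ 2 := by
        conv_lhs => rw [← hsplit, _root_.map_add, _root_.map_add]
    _ ≤ (‖A (fc (resolventFun ⟨l, s⟩) (fc (S.indicator 1) u))‖ +
          ‖A‖ * ((a / 2)⁻¹ * ‖u‖)) ^ 2 := by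
        gcongr
        exact (norm_add_le _ _).trans (by gcongr)
    _ ≤ 2 * (‖A (fc (resolventFun ⟨l, s⟩) (fc (S.indicator 1) u))‖ ^ 2 +
          (‖A‖ * ((a / 2)⁻¹ * ‖u‖)) ^ 2) := add_sq_le
    _ = 2 * ‖A (fc (resolventFun ⟨l, s⟩) (fc (S.indicator 1) u))‖ ^ 2 +
          8 * ‖A‖ ^ 2 / a ^ 2 * ‖u‖ ^ 2 := by field_simp; ring

section Kato

variable {n : ℕ} {T : L2 n →ₗ.[ℂ] L2 n} {fc : (ℝ → ℂ) → (L2 n →L[ℂ] L2 n)} {F : Type*}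
  [NormedAddCommGroup F] [InnerProductSpace ℂ F] [CompleteSpace F] {A : L2 n →L[ℂ] F}
  {S : Set ℝ} {Λ a b κ s : ℝ}

lemma LimitingAbsorption.nonneg (hA : LimitingAbsorption fc A Λ) : 0 ≤ Λ := by
  simpa using (norm_nonneg _).trans (hA (1 + Complex.I) (by simp) (by simp) (by simp))

lemma IsBorelFunctionalCalculus.integral_norm_comp_resolvent_cutoff_sq_le
    (hfc : IsBorelFunctionalCalculus T fc) (hT : IsSelfAdjoint T) (hS : MeasurableSet S)
    (hSb : Bornology.IsBounded S) (hs : s ≠ 0) {K : ℝ}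
    (hK : ∀ l, |s| * ‖A ∘L fc (resolventFun ⟨l, |s|⟩) ∘L fc (S.indicator 1)‖ ^ 2 ≤ K)
    (hab : a ≤ b) (u : L2 n) :
    ∫ l in a..b, ‖A (fc (resolventFun ⟨l, s⟩) (fc (S.indicator 1) u))‖ ^ 2 ≤
      4 * π * K * ‖u‖ ^ 2 := by
  have hcont : ∀ {r : ℝ}, r ≠ 0 →
      Continuous fun l => A (fc (resolventFun ⟨l, r⟩) (fc (S.indicator 1) u)) :=
    fun hr => hfc.continuous_comp_resolvent_line_apply hT A hr _
  have he := abs_pos.2 hs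
  have hsum := integral_norm_sq_add_norm_sq_le (hcont he.ne') (hcont (neg_ne_zero.2 he.ne'))
    (fun N hN => hfc.integral_norm_comp_resolvent_jump_sq_le hT hS he hK
      (neg_le_self hN) u) (hfc.tendsto_integral_mixed hT A hS hSb he u) hab
  refine (intervalIntegral.integral_mono_on hab ((hcont hs).norm.pow 2 |>.intervalIntegrable _ _)
    (((hcont he.ne').norm.pow 2).add ((hcont (neg_ne_zero.2 he.ne')).norm.pow 2)
      |>.intervalIntegrable _ _) fun l _ => ?_).trans hsum
  rcases abs_choice s with h | h <;> rw [h]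
  · exact le_add_of_nonneg_right (sq_nonneg _)
  · rw [neg_neg]
    exact le_add_of_nonneg_left (sq_nonneg _)

/-- Near the energy window limiting absorption applies; away from it, the resolvent is bounded by
the inverse distance to the window. -/
lemma LimitingAbsorption.abs_mul_norm_comp_resolvent_cutoff_sq_le
    (hA : LimitingAbsorption fc A Λ) (hfc : IsBorelFunctionalCalculus T fc)
    (hT : IsSelfAdjoint T) (ha : 4 ≤ a) (hs : s ≠ 0) (hs1 : |s| ≤ 1) (l : ℝ) :
    |s| * ‖A ∘L fc (resolventFun ⟨l, s⟩) ∘L fc ((Icc (a / 2) (2 * b)).indicator 1)‖ ^ 2 ≤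
      (2 * Λ + 16 * ‖A‖ ^ 2) / √a := by
  have ha0 : 0 < a := by linarith
  have hsa : 0 < √a := Real.sqrt_pos.2 ha0
  have hΛ := hA.nonneg
  rcases le_or_gt (a / 4) l with hl | hl
  · have hsqrt : √a / 2 ≤ √l := by
      refine Real.le_sqrt_of_sq_le ?_
      rw [div_pow, Real.sq_sqrt ha0.le]
      linarith
    have hle : ‖A ∘L fc (resolventFun ⟨l, s⟩) ∘L fc ((Icc (a / 2) (2 * b)).indicator 1)‖ ≤
        ‖A ∘L fc (resolventFun ⟨l, s⟩)‖ := by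
      rw [← ContinuousLinearMap.comp_assoc]
      exact (ContinuousLinearMap.opNorm_comp_le _ _).trans
        (mul_le_of_le_one_right (norm_nonneg _) (hfc.norm_cutoff_le measurableSet_Icc))
    calc |s| * ‖A ∘L fc (resolventFun ⟨l, s⟩) ∘L fc ((Icc (a / 2) (2 * b)).indicator 1)‖ ^ 2
        ≤ |s| * ‖A ∘L fc (resolventFun ⟨l, s⟩)‖ ^ 2 := by gcongr
      _ ≤ Λ / √l := hfc.abs_im_mul_norm_comp_resolvent_sq_le hT (z := ⟨l, s⟩) hs
          (hA ⟨l, s⟩ (by simp only; linarith) hs hs1)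
      _ ≤ Λ / (√a / 2) := by gcongr
      _ = 2 * Λ / √a := by ring
      _ ≤ (2 * Λ + 16 * ‖A‖ ^ 2) / √a := by gcongr; exact le_add_of_nonneg_right (by positivity)
  · have hfar := hfc.norm_resolvent_comp_cutoff_le (z := ⟨l, s⟩) (d := a / 4)
      (measurableSet_Icc (a := a / 2) (b := 2 * b)) hs (by positivity) fun x hx => by
        have hdist := abs_sub_re_le_norm_ofReal_sub ⟨l, s⟩ x
        simp only at hdist
        linarith [le_abs_self (x - l), hx.1]
    have hsqrt : √a ≤ a ^ 2 := by
      nlinarith [Real.sq_sqrt ha0.le, Real.one_le_sqrt.2 (by linarith : (1 : ℝ) ≤ a)]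
    calc |s| * ‖A ∘L fc (resolventFun ⟨l, s⟩) ∘L fc ((Icc (a / 2) (2 * b)).indicator 1)‖ ^ 2
        ≤ 1 * (‖A‖ * (a / 4)⁻¹) ^ 2 := by
          gcongr
          exact (ContinuousLinearMap.opNorm_comp_le _ _).trans (by gcongr)
      _ = 16 * ‖A‖ ^ 2 / a ^ 2 := by field_simp; ring
      _ ≤ 16 * ‖A‖ ^ 2 / √a := by gcongr
      _ ≤ (2 * Λ + 16 * ‖A‖ ^ 2) / √a := by gcongr; exact le_add_of_nonneg_left (by positivity)

theorem LimitingAbsorption.integral_norm_comp_resolvent_sq_le (hA : LimitingAbsorption fc A Λ)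
    (hfc : IsBorelFunctionalCalculus T fc) (hT : IsSelfAdjoint T) (ha : 4 ≤ a) (hab : a ≤ b)
    (hκ : b ≤ κ * a) (hs : s ≠ 0) (hs1 : |s| ≤ 1) (u : L2 n) :
    ∫ l in a..b, ‖A (fc (resolventFun ⟨l, s⟩) u)‖ ^ 2 ≤
      katoConst ‖A‖ Λ κ / √a * ‖u‖ ^ 2 := by
  have ha0 : 0 < a := by linarith
  have hsqrt : √a ≤ a := (Real.sqrt_le_left ha0.le).2 (by nlinarith)
  have hκ0 : 0 ≤ κ := by nlinarith
  set S := Icc (a / 2) (2 * b)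
  have hcont : ∀ v, Continuous fun l => ‖A (fc (resolventFun ⟨l, s⟩) v)‖ ^ 2 :=
    fun v => (hfc.continuous_comp_resolvent_line_apply hT A hs v).norm.pow 2
  have hnear := hfc.integral_norm_comp_resolvent_cutoff_sq_le hT (S := S) measurableSet_Icc
    (Metric.isBounded_Icc _ _) hs (fun l => by
      simpa only [abs_abs] using hA.abs_mul_norm_comp_resolvent_cutoff_sq_le hfc hT ha
        (abs_ne_zero.2 hs) ((abs_abs s).trans_le hs1) l) hab u
  calc ∫ l in a..b, ‖A (fc (resolventFun ⟨l, s⟩) u)‖ ^ 2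
      ≤ ∫ l in a..b, (2 * ‖A (fc (resolventFun ⟨l, s⟩) (fc (S.indicator 1) u))‖ ^ 2 +
          8 * ‖A‖ ^ 2 / a ^ 2 * ‖u‖ ^ 2) :=
        intervalIntegral.integral_mono_on hab ((hcont u).intervalIntegrable _ _)
          ((continuous_const.mul (hcont _)).add continuous_const |>.intervalIntegrable _ _)
          fun l hl => hfc.norm_comp_resolvent_sq_le_add_cutoff A ha0 hs hl u
    _ = 2 * (∫ l in a..b, ‖A (fc (resolventFun ⟨l, s⟩) (fc (S.indicator 1) u))‖ ^ 2) +
          (b - a) * (8 * ‖A‖ ^ 2 / a ^ 2 * ‖u‖ ^ 2) := by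
        rw [intervalIntegral.integral_add
          (((hcont _).intervalIntegrable _ _).const_mul 2) intervalIntegrable_const,
          intervalIntegral.integral_const_mul, intervalIntegral.integral_const, smul_eq_mul]
    _ ≤ 2 * (4 * π * ((2 * Λ + 16 * ‖A‖ ^ 2) / √a) * ‖u‖ ^ 2) +
          (κ * a - a) * (8 * ‖A‖ ^ 2 / a ^ 2 * ‖u‖ ^ 2) := by gcongr
    _ = (8 * π * (2 * Λ + 16 * ‖A‖ ^ 2) / √a + 8 * (κ - 1) * ‖A‖ ^ 2 / a) * ‖u‖ ^ 2 := by
        field_simp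
        ring
    _ ≤ katoConst ‖A‖ Λ κ / √a * ‖u‖ ^ 2 := by
        rw [katoConst, add_div]
        gcongr
        exact sub_le_self κ zero_le_one

lemma LimitingAbsorption.integral_add_norm_comp_resolvent_sq_le
    (hA : LimitingAbsorption fc A Λ) (hfc : IsBorelFunctionalCalculus T fc)
    (hT : IsSelfAdjoint T) (ha : 4 ≤ a) (hab : a ≤ b) (hκ : b ≤ κ * a) (hs : s ≠ 0)
    (hs1 : |s| ≤ 1) (u v : L2 n) :
    ∫ l in a..b, (‖A (fc (resolventFun ⟨l, -s⟩) u)‖ ^ 2 + ‖A (fc (resolventFun ⟨l, s⟩) v)‖ ^ 2) ≤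
      katoConst ‖A‖ Λ κ / √a * (‖u‖ ^ 2 + ‖v‖ ^ 2) := by
  have hcont : ∀ {r : ℝ}, r ≠ 0 → ∀ w, Continuous fun l => ‖A (fc (resolventFun ⟨l, r⟩) w)‖ ^ 2 :=
    fun hr w => (hfc.continuous_comp_resolvent_line_apply hT A hr w).norm.pow 2
  rw [intervalIntegral.integral_add ((hcont (neg_ne_zero.2 hs) u).intervalIntegrable a b)
    ((hcont hs v).intervalIntegrable a b), mul_add]
  exact add_le_add (hA.integral_norm_comp_resolvent_sq_le hfc hT ha hab hκ (neg_ne_zero.2 hs)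
    ((abs_neg s).trans_le hs1) u) (hA.integral_norm_comp_resolvent_sq_le hfc hT ha hab hκ hs hs1 v)

end Kato

lemma norm_le_of_forall_norm_inner_le {H : Type*} [NormedAddCommGroup H]
    [InnerProductSpace ℂ H] {D : H →L[ℂ] H} {K : ℝ} (hK : 0 ≤ K)
    (h : ∀ u v, ‖inner ℂ v (D u)‖ ≤ K * (‖u‖ ^ 2 + ‖v‖ ^ 2)) : ‖D‖ ≤ 2 * K := by
  refine D.opNorm_le_bound (by positivity) fun u => ?_
  rcases eq_or_ne (D u) 0 with hDu | hDu
  · rw [hDu, norm_zero]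
    positivity
  have hDu0 : 0 < ‖D u‖ := norm_pos_iff.2 hDu
  rcases eq_or_ne u 0 with rfl | hu
  · exact absurd (map_zero D) hDu
  -- Test against the vector of norm `‖u‖` in the direction of `D u`.
  have htest := h u (((‖u‖ / ‖D u‖ : ℝ) : ℂ) • D u)
  have hinner : ‖inner ℂ (((‖u‖ / ‖D u‖ : ℝ) : ℂ) • D u) (D u)‖ = ‖u‖ * ‖D u‖ := by
    rw [inner_smul_left, norm_mul, RCLike.norm_conj, Complex.norm_of_nonneg (by positivity),
      inner_self_eq_norm_sq_to_K, norm_pow, RCLike.norm_ofReal, abs_norm]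
    field_simp
  rw [hinner, norm_smul, Complex.norm_of_nonneg (by positivity),
    div_mul_cancel₀ _ hDu0.ne'] at htest
  exact le_of_mul_le_mul_left (by linarith) (norm_pos_iff.2 hu)

lemma adjoint_apply_eq_sub_of_apply_eq_sub {H F : Type*} [NormedAddCommGroup H]
    [InnerProductSpace ℂ H] [CompleteSpace H] [NormedAddCommGroup F] [InnerProductSpace ℂ F]
    [CompleteSpace F] {X Y : H →L[ℂ] H} {A : H →L[ℂ] F} {W : F →L[ℂ] F}
    (h : ∀ u, X u = Y u - X (A.adjoint (W (A (Y u))))) (u : H) :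
    X.adjoint u = Y.adjoint u - Y.adjoint (A.adjoint (W.adjoint (A (X.adjoint u)))) := by
  refine ext_inner_left ℂ fun v => ?_
  simp only [inner_sub_right, ContinuousLinearMap.adjoint_inner_right]
  rw [h v, inner_sub_left]
  simp only [← ContinuousLinearMap.adjoint_inner_right, ContinuousLinearMap.adjoint_adjoint]

/-- The second resolvent identity for a perturbation factorized as `A* W A`; it encodes that `fc`
and `fc₀` are the functional calculi of operators `G` and `G₀` with `G = G₀ + A* W A`. -/
def SecondResolventIdentity {n : ℕ} {F : Type*} [NormedAddCommGroup F] [InnerProductSpace ℂ F]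
    [CompleteSpace F] (fc₀ fc : (ℝ → ℂ) → (L2 n →L[ℂ] L2 n)) (A : L2 n →L[ℂ] F)
    (W : F →L[ℂ] F) : Prop :=
  ∀ (z : ℂ), z.im ≠ 0 → ∀ u, fc (resolventFun z) u =
    fc₀ (resolventFun z) u - fc (resolventFun z) (A.adjoint (W (A (fc₀ (resolventFun z) u))))

namespace SecondResolventIdentity

variable {n : ℕ} {T₀ T : L2 n →ₗ.[ℂ] L2 n} {fc₀ fc : (ℝ → ℂ) → (L2 n →L[ℂ] L2 n)} {F : Type*}
  [NormedAddCommGroup F] [InnerProductSpace ℂ F] [CompleteSpace F] {A : L2 n →L[ℂ] F}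
  {W : F →L[ℂ] F} {Λ a b κ : ℝ} {z : ℂ}

lemma symm_apply (hR : SecondResolventIdentity fc₀ fc A W)
    (hfc₀ : IsBorelFunctionalCalculus T₀ fc₀) (hT₀ : IsSelfAdjoint T₀)
    (hfc : IsBorelFunctionalCalculus T fc) (hT : IsSelfAdjoint T) (hz : z.im ≠ 0) (u : L2 n) :
    fc (resolventFun z) u = fc₀ (resolventFun z) u -
      fc₀ (resolventFun z) (A.adjoint (W.adjoint (A (fc (resolventFun z) u)))) := by
  have hz' : (conj z).im ≠ 0 := by simpa using hz
  have hadj := adjoint_apply_eq_sub_of_apply_eq_sub (hR _ hz') u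
  rwa [hfc.adjoint_resolvent hT hz', hfc₀.adjoint_resolvent hT₀ hz', Complex.conj_conj] at hadj

/-- At high energy the perturbation is absorbed by limiting absorption for the free operator. -/
lemma norm_comp_resolvent_le (hR : SecondResolventIdentity fc₀ fc A W)
    (hfc₀ : IsBorelFunctionalCalculus T₀ fc₀) (hT₀ : IsSelfAdjoint T₀)
    (hfc : IsBorelFunctionalCalculus T fc) (hT : IsSelfAdjoint T)
    (hA : LimitingAbsorption fc₀ A Λ) (hre : 1 ≤ z.re) (hz : z.im ≠ 0) (him : |z.im| ≤ 1)
    (hlarge : 2 * (Λ * ‖W‖) ≤ √z.re) (u : L2 n) :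
    ‖A (fc (resolventFun z) u)‖ ≤ 2 * ‖A (fc₀ (resolventFun z) u)‖ := by
  have hsqrt : 0 < √z.re := Real.sqrt_pos.2 (by linarith)
  have hsmall : Λ / √z.re * ‖W‖ ≤ 1 / 2 := by
    rw [div_mul_eq_mul_div, div_le_iff₀ hsqrt]
    linarith
  have hpert : ‖A (fc₀ (resolventFun z) (A.adjoint (W.adjoint (A (fc (resolventFun z) u)))))‖ ≤
      1 / 2 * ‖A (fc (resolventFun z) u)‖ :=
    calc ‖A (fc₀ (resolventFun z) (A.adjoint (W.adjoint (A (fc (resolventFun z) u)))))‖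
        ≤ Λ / √z.re * ‖W.adjoint (A (fc (resolventFun z) u))‖ :=
          ContinuousLinearMap.le_of_opNorm_le (A ∘L fc₀ (resolventFun z) ∘L A.adjoint)
            (hA z hre hz him) _
      _ ≤ Λ / √z.re * (‖W‖ * ‖A (fc (resolventFun z) u)‖) := by
          have := hA.nonneg
          gcongr
          exact ContinuousLinearMap.le_of_opNorm_le _ (LinearIsometryEquiv.norm_map _ W).le _
      _ ≤ 1 / 2 * ‖A (fc (resolventFun z) u)‖ := by rw [← mul_assoc]; gcongr
  have hsplit := congrArg A (hR.symm_apply hfc₀ hT₀ hfc hT hz u)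
  rw [map_sub] at hsplit
  have htri := norm_sub_le (A (fc₀ (resolventFun z) u))
    (A (fc₀ (resolventFun z) (A.adjoint (W.adjoint (A (fc (resolventFun z) u))))))
  rw [← hsplit] at htri
  linarith

lemma norm_inner_resolvent_sub_le (hR : SecondResolventIdentity fc₀ fc A W)
    (hfc₀ : IsBorelFunctionalCalculus T₀ fc₀) (hT₀ : IsSelfAdjoint T₀)
    (hfc : IsBorelFunctionalCalculus T fc) (hT : IsSelfAdjoint T)
    (hA : LimitingAbsorption fc₀ A Λ) (hre : 1 ≤ z.re) (hz : z.im ≠ 0) (him : |z.im| ≤ 1)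
    (hlarge : 2 * (Λ * ‖W‖) ≤ √z.re) (u v : L2 n) :
    ‖inner ℂ v (fc (resolventFun z) u - fc₀ (resolventFun z) u)‖ ≤
      ‖W‖ * (‖A (fc₀ (resolventFun (conj z)) v)‖ ^ 2 + ‖A (fc₀ (resolventFun z) u)‖ ^ 2) := by
  have habs := hR.norm_comp_resolvent_le hfc₀ hT₀ hfc hT hA (z := conj z) (by simpa using hre)
    (by simpa using hz) (by simpa using him) (by simpa using hlarge) v
  rw [hR z hz u, sub_sub_cancel_left, inner_neg_right, norm_neg,
    ← ContinuousLinearMap.adjoint_inner_left, hfc.adjoint_resolvent hT hz,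
    ContinuousLinearMap.adjoint_inner_right]
  calc ‖inner ℂ (A (fc (resolventFun (conj z)) v)) (W (A (fc₀ (resolventFun z) u)))‖
      ≤ 2 * ‖A (fc₀ (resolventFun (conj z)) v)‖ * (‖W‖ * ‖A (fc₀ (resolventFun z) u)‖) :=
        (norm_inner_le_norm _ _).trans (by gcongr; exact W.le_opNorm _)
    _ = ‖W‖ * (2 * ‖A (fc₀ (resolventFun (conj z)) v)‖ * ‖A (fc₀ (resolventFun z) u)‖) := by ring
    _ ≤ _ := by gcongr; exact two_mul_le_add_sq _ _

/-- The difference of the Poisson integrals is a difference of resolvent jumps. -/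
lemma norm_inner_bcfMap_lorentzian_sub_le (hR : SecondResolventIdentity fc₀ fc A W)
    (hfc₀ : IsBorelFunctionalCalculus T₀ fc₀) (hT₀ : IsSelfAdjoint T₀)
    (hfc : IsBorelFunctionalCalculus T fc) (hT : IsSelfAdjoint T)
    (hA : LimitingAbsorption fc₀ A Λ) {l e : ℝ} (hl : 1 ≤ l) (he : e ≠ 0) (he1 : |e| ≤ 1)
    (hlarge : 2 * (Λ * ‖W‖) ≤ √l) (u v : L2 n) :
    2 * ‖inner ℂ v (hfc.bcfMap hT (lorentzianBCF e l) u -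
      hfc₀.bcfMap hT₀ (lorentzianBCF e l) u)‖ ≤
      ‖W‖ * ((‖A (fc₀ (resolventFun ⟨l, -e⟩) v)‖ ^ 2 + ‖A (fc₀ (resolventFun ⟨l, e⟩) u)‖ ^ 2) +
        (‖A (fc₀ (resolventFun ⟨l, -e⟩) u)‖ ^ 2 +
          ‖A (fc₀ (resolventFun ⟨l, e⟩) v)‖ ^ 2)) := by
  have hp := hR.norm_inner_resolvent_sub_le hfc₀ hT₀ hfc hT hA (z := ⟨l, e⟩) hl he he1 hlarge u v
  have hm := hR.norm_inner_resolvent_sub_le hfc₀ hT₀ hfc hT hA (z := ⟨l, -e⟩) hl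
    (neg_ne_zero.2 he) ((abs_neg e).trans_le he1) hlarge u v
  rw [show conj (⟨l, e⟩ : ℂ) = ⟨l, -e⟩ from rfl] at hp
  rw [show conj (⟨l, -e⟩ : ℂ) = ⟨l, e⟩ from Complex.ext rfl (neg_neg e)] at hm
  have hjump := DFunLike.congr_fun (hfc.resolvent_jump hT he l) u
  have hjump₀ := DFunLike.congr_fun (hfc₀.resolvent_jump hT₀ he l) u
  simp only [sub_apply, smul_apply] at hjump hjump₀
  have hdiff : (2 * Complex.I) • (hfc.bcfMap hT (lorentzianBCF e l) u -
      hfc₀.bcfMap hT₀ (lorentzianBCF e l) u) =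
      (fc (resolventFun ⟨l, e⟩) u - fc₀ (resolventFun ⟨l, e⟩) u) -
        (fc (resolventFun ⟨l, -e⟩) u - fc₀ (resolventFun ⟨l, -e⟩) u) := by
    rw [smul_sub, ← hjump, ← hjump₀]
    abel
  have hinner := congrArg (fun w => ‖inner ℂ v w‖) hdiff
  simp only [inner_smul_right, norm_mul, Complex.norm_I, Complex.norm_ofNat, mul_one,
    inner_sub_right v (fc (resolventFun ⟨l, e⟩) u - fc₀ (resolventFun ⟨l, e⟩) u)] at hinner
  rw [hinner, mul_add, add_comm (‖A (fc₀ (resolventFun ⟨l, -e⟩) u)‖ ^ 2)]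
  exact (norm_sub_le _ _).trans (add_le_add hp hm)

lemma norm_inner_bcfMap_integral_sub_le (hR : SecondResolventIdentity fc₀ fc A W)
    (hfc₀ : IsBorelFunctionalCalculus T₀ fc₀) (hT₀ : IsSelfAdjoint T₀)
    (hfc : IsBorelFunctionalCalculus T fc) (hT : IsSelfAdjoint T)
    (hA : LimitingAbsorption fc₀ A Λ) (ha : 4 ≤ a) (hab : a ≤ b) (hκ : b ≤ κ * a)
    (hlarge : 2 * (Λ * ‖W‖) ≤ √a) {f : ℝ → ℂ} (hf : Continuous f) {M : ℝ}
    (hM : ∀ x, ‖f x‖ ≤ M) {e : ℝ} (he : e ≠ 0) (he1 : |e| ≤ 1) (u v : L2 n) :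
    ‖inner ℂ v (hfc.bcfMap hT (∫ l in a..b, f l • lorentzianBCF e l) u -
      hfc₀.bcfMap hT₀ (∫ l in a..b, f l • lorentzianBCF e l) u)‖ ≤
      M * ‖W‖ * (katoConst ‖A‖ Λ κ / √a) * (‖u‖ ^ 2 + ‖v‖ ^ 2) := by
  have hM0 : 0 ≤ M := (norm_nonneg _).trans (hM 0)
  let q : BoundedContinuousFunction ℝ ℂ →L[ℂ] ℂ := innerSL ℂ v ∘L
    ContinuousLinearMap.apply ℂ (L2 n) u ∘L (hfc.bcfMap hT - hfc₀.bcfMap hT₀)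
  let N : L2 n → L2 n → ℝ → ℝ := fun w w' l =>
    ‖A (fc₀ (resolventFun ⟨l, -e⟩) w)‖ ^ 2 + ‖A (fc₀ (resolventFun ⟨l, e⟩) w')‖ ^ 2
  have hN : ∀ w w', IntervalIntegrable (N w w') volume a b := fun w w' =>
    hfc₀.intervalIntegrable_add_norm_comp_resolvent_sq hT₀ A he a b w w'
  have hpt : ∀ l ∈ Icc a b, ‖q (f l • lorentzianBCF e l)‖ ≤
      M * ‖W‖ / 2 * (N v u l + N u v l) := fun l hl => by
    have hjump := hR.norm_inner_bcfMap_lorentzian_sub_le hfc₀ hT₀ hfc hT hA (l := l)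
      (by linarith [hl.1]) he he1 (hlarge.trans (Real.sqrt_le_sqrt hl.1)) u v
    rw [map_smul, norm_smul]
    calc ‖f l‖ * ‖q (lorentzianBCF e l)‖
        ≤ M * (‖W‖ * (N v u l + N u v l) / 2) := by
          gcongr
          · exact hM l
          · exact (le_div_iff₀' two_pos).2 hjump
      _ = _ := by ring
  calc ‖q (∫ l in a..b, f l • lorentzianBCF e l)‖
      = ‖∫ l in a..b, q (f l • lorentzianBCF e l)‖ :=
        congrArg norm (q.intervalIntegral_comp_comm
          ((hf.smul (continuous_lorentzianBCF e)).intervalIntegrable a b)).symm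
    _ ≤ ∫ l in a..b, M * ‖W‖ / 2 * (N v u l + N u v l) :=
        intervalIntegral.norm_integral_le_of_norm_le hab
          (Eventually.of_forall fun l hl => hpt l (Ioc_subset_Icc_self hl))
          (((hN v u).add (hN u v)).const_mul _)
    _ = M * ‖W‖ / 2 * ((∫ l in a..b, N v u l) + ∫ l in a..b, N u v l) := by
        rw [intervalIntegral.integral_const_mul, intervalIntegral.integral_add (hN v u) (hN u v)]
    _ ≤ M * ‖W‖ / 2 * (katoConst ‖A‖ Λ κ / √a * (‖v‖ ^ 2 + ‖u‖ ^ 2) +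
          katoConst ‖A‖ Λ κ / √a * (‖u‖ ^ 2 + ‖v‖ ^ 2)) := by
        gcongr <;> exact hA.integral_add_norm_comp_resolvent_sq_le hfc₀ hT₀ ha hab hκ he he1 _ _
    _ = M * ‖W‖ * (katoConst ‖A‖ Λ κ / √a) * (‖u‖ ^ 2 + ‖v‖ ^ 2) := by ring

theorem norm_sub_le_of_support_subset (hR : SecondResolventIdentity fc₀ fc A W)
    (hfc₀ : IsBorelFunctionalCalculus T₀ fc₀) (hT₀ : IsSelfAdjoint T₀)
    (hfc : IsBorelFunctionalCalculus T fc) (hT : IsSelfAdjoint T)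
    (hA : LimitingAbsorption fc₀ A Λ) (ha : 4 ≤ a) (hab : a ≤ b) (hκ : b ≤ κ * a)
    (hlarge : 2 * (Λ * ‖W‖) ≤ √a) {f : ℝ → ℂ} (hf : Continuous f) {M : ℝ}
    (hM : ∀ x, ‖f x‖ ≤ M) (hsupp : Function.support f ⊆ Ioc a b) :
    ‖fc f - fc₀ f‖ ≤ 2 * (M * ‖W‖ * (katoConst ‖A‖ Λ κ / √a)) := by
  have hM0 : 0 ≤ M := (norm_nonneg _).trans (hM 0)
  have hκ0 : 0 ≤ κ := by nlinarith
  have hK0 := katoConst_nonneg (ν := ‖A‖) hA.nonneg hκ0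
  have hpos : ∀ k : ℕ, 0 < 1 / ((k : ℝ) + 1) := fun k => Nat.one_div_pos_of_nat
  refine norm_le_of_forall_norm_inner_le (by positivity) fun u v => ?_
  have hstone := hfc.tendsto_bcfMap_integral hT hf hM hab hsupp hpos
    tendsto_one_div_add_atTop_nhds_zero_nat u
  have hstone₀ := hfc₀.tendsto_bcfMap_integral hT₀ hf hM hab hsupp hpos
    tendsto_one_div_add_atTop_nhds_zero_nat u
  refine le_of_tendsto (((innerSL ℂ v).continuous.tendsto _).comp (hstone.sub hstone₀)).norm
    (Eventually.of_forall fun k => ?_)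
  have hk1 : |1 / ((k : ℝ) + 1)| ≤ 1 := by
    rw [abs_of_pos (hpos k)]
    exact (one_div_le_one_div_of_le one_pos (by linarith [Nat.cast_nonneg (α := ℝ) k])).trans_eq
      one_div_one
  have hbound := hR.norm_inner_bcfMap_integral_sub_le hfc₀ hT₀ hfc hT hA ha hab hκ hlarge hf hM
    (hpos k).ne' hk1 u v
  have hpi : ‖(π⁻¹ : ℂ)‖ ≤ 1 := by
    rw [norm_inv, Complex.norm_of_nonneg pi_pos.le]
    exact inv_le_one_of_one_le₀ (by linarith [pi_gt_three])
  rw [Function.comp_apply, innerSL_apply_apply, ← smul_sub, inner_smul_right, norm_mul]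
  exact (mul_le_of_le_one_left (norm_nonneg _) hpi).trans hbound

end SecondResolventIdentity

/-! ### Semiclassical scaling -/

lemma exists_support_subset_Ioc {E : Type*} [Zero E] {ψ : ℝ → E} (hψ : HasCompactSupport ψ)
    (hpos : tsupport ψ ⊆ Ioi 0) : ∃ α β, 0 < α ∧ α ≤ β ∧ Function.support ψ ⊆ Ioc α β := by
  obtain ⟨β, hβ⟩ := hψ.isCompact.bddAbove
  obtain ⟨α, hα, hlow⟩ : ∃ α, 0 < α ∧ ∀ x ∈ tsupport ψ, α < x := by
    rcases (tsupport ψ).eq_empty_or_nonempty with hempty | hne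
    · exact ⟨1, one_pos, by simp [hempty]⟩
    · obtain ⟨x₀, hx₀, hmin⟩ := hψ.isCompact.exists_isLeast hne
      have hx₀pos : 0 < x₀ := hpos hx₀
      exact ⟨x₀ / 2, half_pos hx₀pos, fun x hx => (half_lt_self hx₀pos).trans_le (hmin hx)⟩
  refine ⟨α, max α β, hα, le_max_left α β, fun x hx => ?_⟩
  have hx' := subset_tsupport ψ hx
  exact ⟨hlow x hx', (hβ hx').trans (le_max_right α β)⟩

namespace SecondResolventIdentity

variable {n : ℕ} {T₀ T : L2 n →ₗ.[ℂ] L2 n} {fc₀ fc : (ℝ → ℂ) → (L2 n →L[ℂ] L2 n)} {F : Type*}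
  [NormedAddCommGroup F] [InnerProductSpace ℂ F] [CompleteSpace F] {A : L2 n →L[ℂ] F}
  {W : F →L[ℂ] F} {Λ α β h M : ℝ} {φ ψ : ℝ → ℂ}

lemma norm_comp_dilation_sub_le (hR : SecondResolventIdentity fc₀ fc A W)
    (hfc₀ : IsBorelFunctionalCalculus T₀ fc₀) (hT₀ : IsSelfAdjoint T₀)
    (hfc : IsBorelFunctionalCalculus T fc) (hT : IsSelfAdjoint T)
    (hA : LimitingAbsorption fc₀ A Λ) (hα : 0 < α) (hαβ : α ≤ β)
    (hsupp : Function.support ψ ⊆ Ioc α β) (hh : 0 < h)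
    (hlarge : 2 * (Λ * ‖W‖) + 2 ≤ √α / h) (hφ : Continuous φ) (hψ : Continuous ψ)
    (hM : ∀ x, ‖φ x * ψ (h ^ 2 * x)‖ ≤ M) :
    ‖fc (fun x => φ x * ψ (h ^ 2 * x)) - fc₀ (fun x => φ x * ψ (h ^ 2 * x))‖ ≤
      2 * (M * ‖W‖ * (katoConst ‖A‖ Λ (β / α) / √α)) * h := by
  have hh2 : 0 < h ^ 2 := by positivity
  have hsqrt : √(α / h ^ 2) = √α / h := by rw [Real.sqrt_div hα.le, Real.sqrt_sq hh.le]
  have hΛW : 0 ≤ Λ * ‖W‖ := mul_nonneg hA.nonneg (norm_nonneg W)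
  have hfour : 4 ≤ α / h ^ 2 := by
    have htwo : 2 ≤ √(α / h ^ 2) := by rw [hsqrt]; linarith
    calc (4 : ℝ) = 2 ^ 2 := by norm_num
      _ ≤ α / h ^ 2 := (Real.le_sqrt' two_pos).1 htwo
  have hsupp' : Function.support (fun x => φ x * ψ (h ^ 2 * x)) ⊆ Ioc (α / h ^ 2) (β / h ^ 2) := by
    intro x hx
    have hψx := hsupp (right_ne_zero_of_mul hx)
    exact ⟨(div_lt_iff₀' hh2).2 hψx.1, (le_div_iff₀' hh2).2 hψx.2⟩
  calc ‖fc (fun x => φ x * ψ (h ^ 2 * x)) - fc₀ (fun x => φ x * ψ (h ^ 2 * x))‖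
      ≤ 2 * (M * ‖W‖ * (katoConst ‖A‖ Λ (β / α) / √(α / h ^ 2))) :=
        hR.norm_sub_le_of_support_subset hfc₀ hT₀ hfc hT hA hfour (by gcongr)
          (by field_simp; rfl) (by rw [hsqrt]; linarith) (by fun_prop) hM hsupp'
    _ = _ := by rw [hsqrt]; field_simp

theorem exists_norm_comp_dilation_sub_le (hR : SecondResolventIdentity fc₀ fc A W)
    (hfc₀ : IsBorelFunctionalCalculus T₀ fc₀) (hT₀ : IsSelfAdjoint T₀)
    (hfc : IsBorelFunctionalCalculus T fc) (hT : IsSelfAdjoint T)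
    (hA : LimitingAbsorption fc₀ A Λ) (hψ : Continuous ψ) (hψc : HasCompactSupport ψ)
    (hψpos : tsupport ψ ⊆ Ioi 0) :
    ∃ C : ℝ, 0 < C ∧ ∀ φ : ℝ → ℂ, Continuous φ → (∀ x, ‖φ x‖ ≤ 1) → ∀ h : ℝ, 0 < h →
      ‖fc (fun x => φ x * ψ (h ^ 2 * x)) - fc₀ (fun x => φ x * ψ (h ^ 2 * x))‖ ≤ C * h := by
  obtain ⟨α, β, hα, hαβ, hsupp⟩ := exists_support_subset_Ioc hψc hψpos
  obtain ⟨M, hM⟩ := hψc.exists_bound_of_continuous hψ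
  have hM0 : 0 ≤ M := (norm_nonneg _).trans (hM 0)
  have hK := katoConst_nonneg (ν := ‖A‖) hA.nonneg (div_nonneg (hα.le.trans hαβ) hα.le)
  set L : ℝ := 2 * (Λ * ‖W‖) + 2
  set C₁ : ℝ := 2 * (M * ‖W‖ * (katoConst ‖A‖ Λ (β / α) / √α))
  set C₂ : ℝ := 2 * M * (L / √α)
  have hL : 0 ≤ L := add_nonneg (mul_nonneg two_pos.le (mul_nonneg hA.nonneg (norm_nonneg W)))
    two_pos.le
  have hC₁ : 0 ≤ C₁ := by positivity
  have hC₂ : 0 ≤ C₂ := by positivity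
  refine ⟨C₁ + C₂ + 1, by positivity, fun φ hφ hφ1 h hh => ?_⟩
  have hfM : ∀ x, ‖φ x * ψ (h ^ 2 * x)‖ ≤ M := fun x =>
    (norm_mul _ _).trans_le ((mul_le_of_le_one_left (norm_nonneg _) (hφ1 x)).trans (hM _))
  rcases le_or_gt L (√α / h) with hlarge | hsmall
  · refine (hR.norm_comp_dilation_sub_le hfc₀ hT₀ hfc hT hA hα hαβ hsupp hh hlarge hφ hψ
      hfM).trans ?_
    gcongr
    linarith
  -- For `h` bounded below the two terms are estimated separately.
  · have hmeas : Measurable fun x => φ x * ψ (h ^ 2 * x) := by fun_prop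
    have hone : 1 ≤ L / √α * h := by
      rw [div_mul_eq_mul_div, one_le_div (Real.sqrt_pos.2 hα)]
      exact ((div_lt_iff₀ hh).1 hsmall).le
    calc ‖fc (fun x => φ x * ψ (h ^ 2 * x)) - fc₀ (fun x => φ x * ψ (h ^ 2 * x))‖
        ≤ M + M := (norm_sub_le _ _).trans
          (add_le_add (hfc.norm_le _ M hmeas hfM) (hfc₀.norm_le _ M hmeas hfM))
      _ = 2 * M * 1 := by ring
      _ ≤ 2 * M * (L / √α * h) := by gcongr
      _ = C₂ * h := by ring
      _ ≤ (C₁ + C₂ + 1) * h := by gcongr; linarith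

end SecondResolventIdentity

/-! ### Schrödinger operators -/

section MulOp

variable {α : Type*} [MeasurableSpace α] {μ : Measure α} {g : α → ℝ}

/-- Multiplication by an essentially bounded real function `g`, as a bounded operator on `L²`. -/
def mulOp (g : α → ℝ) (hg : MemLp (fun x => (g x : ℂ)) ⊤ μ) : Lp ℂ 2 μ →L[ℂ] Lp ℂ 2 μ :=
  (ContinuousLinearMap.mul ℂ ℂ).holderL μ ⊤ 2 2 hg.toLp

lemma coeFn_mulOp (hg : MemLp (fun x => (g x : ℂ)) ⊤ μ) (u : Lp ℂ 2 μ) :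
    mulOp g hg u =ᵐ[μ] fun x => (g x : ℂ) * u x := by
  filter_upwards [(ContinuousLinearMap.mul ℂ ℂ).coeFn_holder (r := 2) hg.toLp u, hg.coeFn_toLp]
    with x hx hgx
  rw [← hgx]
  exact hx

lemma adjoint_mulOp (hg : MemLp (fun x => (g x : ℂ)) ⊤ μ) :
    (mulOp g hg).adjoint = mulOp g hg := by
  refine ((ContinuousLinearMap.eq_adjoint_iff _ _).2 fun u v => ?_).symm
  rw [L2.inner_def, L2.inner_def]
  refine integral_congr_ae ?_
  filter_upwards [coeFn_mulOp hg u, coeFn_mulOp hg v] with x hu hv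
  rw [hu, hv, RCLike.inner_apply, RCLike.inner_apply, map_mul, Complex.conj_ofReal]
  ring

lemma memLp_top_ofReal_of_bound (hg : AEStronglyMeasurable g μ) (C : ℝ) (hC : ∀ x, |g x| ≤ C) :
    MemLp (fun x => (g x : ℂ)) ⊤ μ :=
  memLp_top_of_bound (Complex.continuous_ofReal.comp_aestronglyMeasurable hg) C
    (Eventually.of_forall fun x => (Complex.norm_real (g x)).trans_le (hC x))

end MulOp

section Schrodinger

variable {n : ℕ} {V : Euc n → ℝ} {T₀ T : L2 n →ₗ.[ℂ] L2 n}
  {fc₀ fc : (ℝ → ℂ) → (L2 n →L[ℂ] L2 n)} {z : ℂ}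

lemma mulOp_toL2 {g : Euc n → ℝ} (hg : MemLp (fun x => (g x : ℂ)) ⊤ volume)
    (hg' : g.HasTemperateGrowth) (u : 𝓢(Euc n, ℂ)) : mulOp g hg (toL2 u) = toL2 (mulFun g u) := by
  apply Lp.ext
  filter_upwards [coeFn_mulOp hg (toL2 u), coeFn_toL2 u, coeFn_toL2 (mulFun g u)] with x hx hu hgu
  rw [hx, hu, hgu, mulFun_apply hg']

lemma continuous_jbPow (s : ℝ) : Continuous (jbPow s : Euc n → ℝ) :=
  (hasTemperateGrowth_jbPow s).1.continuous

lemma memLp_top_jbPow {s : ℝ} (hs : s ≤ 0) :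
    MemLp (fun x : Euc n => (jbPow s x : ℂ)) ⊤ volume :=
  memLp_top_ofReal_of_bound (continuous_jbPow s).aestronglyMeasurable 1 fun x =>
    (abs_of_pos (jbPow_pos s x)).trans_le (jbPow_le_one hs x)

lemma resolvent_toL2_freeOp_add (hT : IsSchrodingerOp V T) (hfc : IsBorelFunctionalCalculus T fc)
    (hz : z.im ≠ 0) {u : 𝓢(Euc n, ℂ)} {w : L2 n}
    (hw : w =ᵐ[volume] fun x => (V x : ℂ) * toL2 u x) :
    fc (resolventFun z) (toL2 (freeOp z u) + w) = toL2 u := by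
  obtain ⟨v, hv, hTv⟩ := hT.eq_on_schwartz u
  have hvu : (v : L2 n) = toL2 u := Lp.ext (hv.trans (coeFn_toL2 u).symm)
  have happly : T v - z • (v : L2 n) = toL2 (freeOp z u) + w := by
    rw [hvu]
    apply Lp.ext
    filter_upwards [Lp.coeFn_sub (T v) (z • toL2 u), Lp.coeFn_smul z (toL2 u), coeFn_toL2 u,
      coeFn_toL2 (freeOp z u), Lp.coeFn_add (toL2 (freeOp z u)) w, hw, hTv]
      with x hsub hsmul hu hfree hadd hwx hTx
    rw [hsub, hadd, Pi.sub_apply, Pi.add_apply, hsmul, hfree, hwx, hTx, Pi.smul_apply, hu,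
      lapl_eq_laplacian, freeOp, sub_apply, neg_apply, smul_apply]
    ring
  rw [← happly, hfc.resolvent_apply_sub hT.selfAdjoint hz, hvu]

lemma resolvent_toL2_freeOp (hT₀ : IsSchrodingerOp (fun _ => (0 : ℝ)) T₀)
    (hfc₀ : IsBorelFunctionalCalculus T₀ fc₀) (hz : z.im ≠ 0) (u : 𝓢(Euc n, ℂ)) :
    fc₀ (resolventFun z) (toL2 (freeOp z u)) = toL2 u := by
  have hzero : (0 : L2 n) =ᵐ[volume] fun x => ((0 : ℝ) : ℂ) * toL2 u x := by
    filter_upwards [Lp.coeFn_zero ℂ 2 (volume : Measure (Euc n))] with x hx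
    rw [hx, Pi.zero_apply, Complex.ofReal_zero, zero_mul]
  simpa using resolvent_toL2_freeOp_add hT₀ hfc₀ hz hzero

theorem limitingAbsorption_mulOp_jbPow (hn : 3 ≤ n)
    (hT₀ : IsSchrodingerOp (fun _ => (0 : ℝ)) T₀) (hfc₀ : IsBorelFunctionalCalculus T₀ fc₀) :
    LimitingAbsorption fc₀ (mulOp (jbPow (-3 / 2)) (memLp_top_jbPow (by norm_num)))
      (lapConst n) := by
  intro z hre hz him
  have hsqrt : 0 < √z.re := Real.sqrt_pos.2 (by linarith)
  have hΛ : 0 ≤ lapConst n / √z.re := by unfold lapConst; positivity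
  rw [adjoint_mulOp]
  set A : L2 n →L[ℂ] L2 n := mulOp (jbPow (-3 / 2)) (memLp_top_jbPow (by norm_num))
  have hAtoL2 : ∀ u, A (toL2 u) = toL2 (mulFun (jbPow (-3 / 2)) u) :=
    mulOp_toL2 _ (hasTemperateGrowth_jbPow _)
  refine ContinuousLinearMap.opNorm_le_bound _ hΛ fun v => ?_
  refine denseRange_toL2.induction_on (p := fun v : L2 n =>
    ‖(A ∘L fc₀ (resolventFun z) ∘L A) v‖ ≤ lapConst n / √z.re * ‖v‖) v
    (isClosed_le (by fun_prop) (by fun_prop)) fun w => ?_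
  obtain ⟨u, hu⟩ := freeOp_surjective hz (mulFun (jbPow (-3 / 2)) w)
  have happly : (A ∘L fc₀ (resolventFun z) ∘L A) (toL2 w) = toL2 (mulFun (jbPow (-3 / 2)) u) := by
    simp only [ContinuousLinearMap.comp_apply]
    rw [hAtoL2, ← hu, resolvent_toL2_freeOp hT₀ hfc₀ hz, hAtoL2]
  have hw : mulFun (jbPow (3 / 2)) (freeOp z u) = w := by
    rw [hu, mulFun_jbPow_jbPow, show (3 / 2 + -3 / 2 : ℝ) = 0 by norm_num, mulFun_jbPow_zero]
  have hbound := sqrt_re_mul_weightedNorm_le hn hre him u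
  rw [weightedNorm, weightedNorm, hw] at hbound
  rw [happly, div_mul_eq_mul_div, le_div_iff₀' hsqrt]
  exact hbound

theorem secondResolventIdentity_of_isSchrodingerOp (hT₀ : IsSchrodingerOp (fun _ => (0 : ℝ)) T₀)
    (hfc₀ : IsBorelFunctionalCalculus T₀ fc₀) (hT : IsSchrodingerOp V T)
    (hfc : IsBorelFunctionalCalculus T fc) {F : Type*} [NormedAddCommGroup F]
    [InnerProductSpace ℂ F] [CompleteSpace F] {A : L2 n →L[ℂ] F} {W : F →L[ℂ] F}
    (hAWA : ∀ u : L2 n, A.adjoint (W (A u)) =ᵐ[volume] fun x => (V x : ℂ) * u x) :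
    SecondResolventIdentity fc₀ fc A W := by
  intro z hz f
  refine denseRange_toL2.induction_on (p := fun f : L2 n => fc (resolventFun z) f =
    fc₀ (resolventFun z) f - fc (resolventFun z) (A.adjoint (W (A (fc₀ (resolventFun z) f))))) f
    (isClosed_eq (by fun_prop) (by fun_prop)) fun w => ?_
  obtain ⟨u, rfl⟩ := freeOp_surjective hz w
  rw [resolvent_toL2_freeOp hT₀ hfc₀ hz]
  have hres := resolvent_toL2_freeOp_add hT hfc hz (hAWA (toL2 u))
  rw [map_add] at hres
  exact eq_sub_of_add_eq hres

lemma memLp_top_mul_jbPow_three (hVmeas : AEStronglyMeasurable V volume) {C₀ : ℝ}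
    (hV : ∀ x, |V x| ≤ C₀ * jb x ^ (-3 : ℝ)) :
    MemLp (fun x => ((V x * jbPow 3 x : ℝ) : ℂ)) ⊤ volume := by
  refine memLp_top_ofReal_of_bound (hVmeas.mul (continuous_jbPow 3).aestronglyMeasurable) C₀
    fun x => ?_
  calc |V x * jbPow 3 x| = |V x| * jbPow 3 x := by rw [abs_mul, abs_of_pos (jbPow_pos 3 x)]
    _ ≤ C₀ * jbPow (-3) x * jbPow 3 x := by
        gcongr
        · exact (jbPow_pos 3 x).le
        · exact hV x
    _ = C₀ := by rw [mul_assoc, jbPow_mul_jbPow, neg_add_cancel, jbPow_zero, mul_one]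

lemma adjoint_mulOp_mulOp_mulOp (hW : MemLp (fun x => ((V x * jbPow 3 x : ℝ) : ℂ)) ⊤ volume)
    (hA : MemLp (fun x : Euc n => (jbPow (-3 / 2) x : ℂ)) ⊤ volume) (u : L2 n) :
    (mulOp (jbPow (-3 / 2)) hA).adjoint
      (mulOp (fun x => V x * jbPow 3 x) hW (mulOp (jbPow (-3 / 2)) hA u)) =ᵐ[volume]
      fun x => (V x : ℂ) * u x := by
  rw [adjoint_mulOp]
  filter_upwards [coeFn_mulOp hA
    (mulOp (fun x => V x * jbPow 3 x) hW (mulOp (jbPow (-3 / 2)) hA u)),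
    coeFn_mulOp hW (mulOp (jbPow (-3 / 2)) hA u), coeFn_mulOp hA u] with x h₁ h₂ h₃
  have hone : jbPow (-3 / 2) x * (jbPow 3 x * jbPow (-3 / 2) x) = 1 := by
    rw [jbPow_mul_jbPow, jbPow_mul_jbPow, ← jbPow_zero x]
    norm_num
  have honeC : (jbPow (-3 / 2) x : ℂ) * (jbPow 3 x * jbPow (-3 / 2) x) = 1 := mod_cast hone
  rw [h₁, h₂, h₃]
  push_cast
  linear_combination (V x : ℂ) * u x * honeC

end Schrodinger

theorem Psi_L2_L2_bound_general {n : ℕ} (hn : 3 ≤ n) {V : Euc n → ℝ}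
    (hVmeas : AEStronglyMeasurable V volume) {C₀ : ℝ} (hV : ∀ x, |V x| ≤ C₀ * jb x ^ (-3 : ℝ))
    {T₀ : L2 n →ₗ.[ℂ] L2 n} (hT₀ : IsSchrodingerOp (fun _ => (0 : ℝ)) T₀)
    {fc₀ : (ℝ → ℂ) → (L2 n →L[ℂ] L2 n)} (hfc₀ : IsBorelFunctionalCalculus T₀ fc₀)
    {T : L2 n →ₗ.[ℂ] L2 n} (hT : IsSchrodingerOp V T)
    {fc : (ℝ → ℂ) → (L2 n →L[ℂ] L2 n)} (hfc : IsBorelFunctionalCalculus T fc)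
    {ψ : ℝ → ℂ} (hψ : Continuous ψ) (hψc : HasCompactSupport ψ) (hψpos : tsupport ψ ⊆ Ioi 0) :
    ∃ C : ℝ, 0 < C ∧ ∀ φ : ℝ → ℂ, Continuous φ → (∀ x, ‖φ x‖ ≤ 1) → ∀ h : ℝ, 0 < h →
      ‖fc (fun x => φ x * ψ (h ^ 2 * x)) - fc₀ (fun x => φ x * ψ (h ^ 2 * x))‖ ≤ C * h := by
  have hA := limitingAbsorption_mulOp_jbPow hn hT₀ hfc₀
  have hR := secondResolventIdentity_of_isSchrodingerOp hT₀ hfc₀ hT hfc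
    (adjoint_mulOp_mulOp_mulOp (memLp_top_mul_jbPow_three hVmeas hV)
      (memLp_top_jbPow (by norm_num)))
  exact hR.exists_norm_comp_dilation_sub_le hfc₀ hT₀.selfAdjoint hfc hT.selfAdjoint hA hψ hψc
    hψpos

/-- **Theorem 3.1.** `‖Ψ(t;h)‖_{L²→L²} ≤ C h` where
`Ψ(t;h) = e^{itG} ψ(h²G) − e^{itG₀} ψ(h²G₀)`. -/
theorem Psi_L2_L2_bound
    (n : ℕ) (hn : 4 ≤ n) (V : Euc n → ℝ) (hVmeas : Measurable V)
    (C₀ δ : ℝ) (hC₀ : 0 < C₀) (hδ : ((n : ℝ) + 2) / 2 < δ)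
    (hV : ∀ x, |V x| ≤ C₀ * jb x ^ (-δ))
    (T₀ : L2 n →ₗ.[ℂ] L2 n) (hT₀ : IsSchrodingerOp (fun _ => (0 : ℝ)) T₀)
    (fc₀ : (ℝ → ℂ) → (L2 n →L[ℂ] L2 n)) (hfc₀ : IsBorelFunctionalCalculus T₀ fc₀)
    (T : L2 n →ₗ.[ℂ] L2 n) (hT : IsSchrodingerOp V T)
    (fc : (ℝ → ℂ) → (L2 n →L[ℂ] L2 n)) (hfc : IsBorelFunctionalCalculus T fc)
    (ψ : ℝ → ℝ) (hψ : IsCutoff ψ) :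
    ∃ C : ℝ, 0 < C ∧ ∀ (t : ℝ) (h : ℝ), 0 < h → h ≤ 1 →
      ‖fc (fun x : ℝ => Complex.exp (Complex.I * t * x) * ((ψ (h ^ 2 * x) : ℝ) : ℂ)) -
          fc₀ (fun x : ℝ => Complex.exp (Complex.I * t * x) * ((ψ (h ^ 2 * x) : ℝ) : ℂ))‖
        ≤ C * h := by
  have hn4 : (4 : ℝ) ≤ n := mod_cast hn
  obtain ⟨hψsmooth, hψc, hψpos⟩ := hψ
  obtain ⟨C, hC, hbound⟩ := Psi_L2_L2_bound_general (by omega) hVmeas.aestronglyMeasurable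
    (fun x => (hV x).trans (by gcongr; exacts [one_le_jb x, by linarith])) hT₀ hfc₀ hT hfc
    (Complex.continuous_ofReal.comp hψsmooth.continuous) (hψc.comp_left Complex.ofReal_zero)
    ((tsupport_comp_subset Complex.ofReal_zero ψ).trans hψpos)
  refine ⟨C, hC, fun t h hh _ => hbound _ (by fun_prop) (fun x => ?_) h hh⟩
  rw [mul_assoc, ← Complex.ofReal_mul, Complex.norm_exp_I_mul_ofReal]
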